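/- Let α, β ≥ −1/2 and let i, j ≥ 0 be real numbers. Define the Lebesgue constant Λ_n := sup_{x ∈ [−1,1]} (1−x)^{i/2}(1+x)^{j/2} ∫_{−1}^{1} |k_n(J_{i,j} w_{α,β}; x, y)| (1−y)^{i/2}(1+y)^{j/2} w_{α,β}(y) dy (which equals the operator norm of s_n^{(α,β),i,j} := s_n^{i,j}(w_{α,β}; ·) on C[−1,1] and also its operator norm on L¹(w_{α,β})). If max{α,β} > −1/2, then there is a constant c with Λ_n ≤ c · n^{max{α,β}+1/2} for all n ≥ 1; if max{α,β} = −1/2 (i.e. α = β = −1/2), then there is a constant c with Λ_n ≤ c · log n for all n ≥ 2. -/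

import Mathlib

open MeasureTheory Real Set Filter
open scoped ENNReal

noncomputable section

/-- The parabolic-type domain `Ω`, the image of the triangle `-1 < x < y < 1`
under `(x, y) ↦ (x + y, x y)`. -/
def omegaDom : Set (ℝ × ℝ) :=
  {q | ∃ x y : ℝ, -1 < x ∧ x < y ∧ y < 1 ∧ q = (x + y, x * y)}

/-- The square `[-1,1]²`. -/
def sqDom : Set (ℝ × ℝ) := Icc (-1 : ℝ) 1 ×ˢ Icc (-1 : ℝ) 1

/-- The open triangle `-1 < x < y < 1`. -/
def triDom : Set (ℝ × ℝ) := {q | -1 < q.1 ∧ q.1 < q.2 ∧ q.2 < 1}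

/-- The smaller root `x(u,v)` of `t² - u t + v = 0`. -/
def xRoot (q : ℝ × ℝ) : ℝ := (q.1 - Real.sqrt (q.1 ^ 2 - 4 * q.2)) / 2

/-- The larger root `y(u,v)` of `t² - u t + v = 0`. -/
def yRoot (q : ℝ × ℝ) : ℝ := (q.1 + Real.sqrt (q.1 ^ 2 - 4 * q.2)) / 2

/-- Evaluation of a two-variable polynomial at a point of `ℝ²`. -/
def evalP (P : MvPolynomial (Fin 2) ℝ) (q : ℝ × ℝ) : ℝ :=
  MvPolynomial.eval ![q.1, q.2] P

/-- The space `V_n(W)` of orthogonal polynomials of degree `n` for the weight `W`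
on the domain `D`: polynomials of exact total degree `n` orthogonal to all
polynomials of lower degree. -/
def Vpoly (D : Set (ℝ × ℝ)) (W : ℝ × ℝ → ℝ) (n : ℕ) : Set (MvPolynomial (Fin 2) ℝ) :=
  {P | P.totalDegree = n ∧ ∀ Q : MvPolynomial (Fin 2) ℝ, Q.totalDegree < n →
    (∫ q in D, evalP P q * evalP Q q * W q) = 0}

/-- `Q 0, …, Q n` is an orthonormal basis of `V_n(W)` on `D`. -/
def isONBVn (D : Set (ℝ × ℝ)) (W : ℝ × ℝ → ℝ) (n : ℕ)
    (Q : ℕ → MvPolynomial (Fin 2) ℝ) : Prop :=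
  (∀ k, k ≤ n → Q k ∈ Vpoly D W n) ∧
  (∀ k, k ≤ n → ∀ j, j ≤ n →
    (∫ q in D, evalP (Q k) q * evalP (Q j) q * W q) = if k = j then 1 else 0) ∧
  (∀ R ∈ Vpoly D W n, R ∈ Submodule.span ℝ (Q '' Set.Iic n))

/-- `K` is the reproducing kernel of `Π_n²` in `L²(W)` on the domain `D`:
it is a polynomial function, for each fixed `x ∈ D` it is a polynomial of total
degree `≤ n` in the second variable, and it reproduces every polynomial of total
degree `≤ n`. -/
def IsRK (D : Set (ℝ × ℝ)) (W : ℝ × ℝ → ℝ) (n : ℕ) (K : ℝ × ℝ → ℝ × ℝ → ℝ) : Prop :=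
  (∃ KP : MvPolynomial (Fin 4) ℝ,
    ∀ x y : ℝ × ℝ, K x y = MvPolynomial.eval ![x.1, x.2, y.1, y.2] KP) ∧
  (∀ x ∈ D, ∃ P : MvPolynomial (Fin 2) ℝ, P.totalDegree ≤ n ∧ ∀ y, K x y = evalP P y) ∧
  (∀ P : MvPolynomial (Fin 2) ℝ, P.totalDegree ≤ n →
    ∀ x ∈ D, (∫ y in D, K x y * evalP P y * W y) = evalP P x)

/-- `p` is the sequence of orthonormal polynomials with respect to the weight `w`
on `[-1,1]`: `p n` has degree exactly `n`, positive leading coefficient, and the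
`p n` are orthonormal in `L²(w)`. -/
def IsONPS (w : ℝ → ℝ) (p : ℕ → Polynomial ℝ) : Prop :=
  (∀ n, (p n).natDegree = n) ∧ (∀ n, 0 < (p n).leadingCoeff) ∧
  (∀ n m, (∫ x in Icc (-1:ℝ) 1, (p n).eval x * (p m).eval x * w x)
    = if n = m then 1 else 0)

/-- The Christoffel–Darboux kernel `k_n(x,y) = ∑_{j=0}^n p_j(x) p_j(y)`. -/
def CDK (p : ℕ → Polynomial ℝ) (n : ℕ) (x y : ℝ) : ℝ :=
  ∑ j ∈ Finset.range (n + 1), (p j).eval x * (p j).eval y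

/-- The Jacobi factor `J_{a,b}(x) = (1-x)^a (1+x)^b`. -/
def Jw (a b : ℝ) (x : ℝ) : ℝ := (1 - x) ^ a * (1 + x) ^ b

/-- The factor `J*_{a,b}(u,v) = (1-u+v)^a (1+u+v)^b` on `Ω`. -/
def JstarW (a b : ℝ) (q : ℝ × ℝ) : ℝ := (1 - q.1 + q.2) ^ a * (1 + q.1 + q.2) ^ b

/-- Modulus of continuity of `ψ` on `[-1,1]`. -/
def modCont (ψ : ℝ → ℝ) (t : ℝ) : ℝ :=
  sSup {d : ℝ | ∃ x ∈ Icc (-1:ℝ) 1, ∃ y ∈ Icc (-1:ℝ) 1, |x - y| ≤ t ∧ d = |ψ x - ψ y|}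

/-- The generalized Jacobi class `GJ`. -/
def IsGJ (w : ℝ → ℝ) : Prop :=
  ∃ (r : ℕ) (ψ : ℝ → ℝ) (γ₀ γ₁ : ℝ) (γs xs : Fin r → ℝ),
    -1 < γ₀ ∧ -1 < γ₁ ∧ (∀ i, -1 < γs i) ∧
    StrictMono xs ∧ (∀ i, xs i ∈ Ioo (-1:ℝ) 1) ∧
    ContinuousOn ψ (Icc (-1:ℝ) 1) ∧ (∀ x ∈ Icc (-1:ℝ) 1, 0 < ψ x) ∧
    IntegrableOn (fun t => modCont ψ t / t) (Ioc (0:ℝ) 1) ∧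
    (∀ x : ℝ, |x| ≤ 1 → w x = ψ x * (1 - x) ^ γ₀ * (1 + x) ^ γ₁ * ∏ i, |x - xs i| ^ γs i) ∧
    (∀ x : ℝ, 1 < |x| → w x = 0)

/-- The `L^p`-norm `‖f‖_{w,e}` on `[-1,1]` (as an extended nonnegative real). -/
def lpnormI (w : ℝ → ℝ) (e : ℝ) (f : ℝ → ℝ) : ℝ≥0∞ :=
  (∫⁻ x in Icc (-1:ℝ) 1, ENNReal.ofReal (|f x| ^ e * w x)) ^ (1 / e)

/-- The `L^p`-norm `‖f‖_{W,e}` on a planar domain `D` (as an extended nonnegative real). -/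
def lpnormD (D : Set (ℝ × ℝ)) (W : ℝ × ℝ → ℝ) (e : ℝ) (f : ℝ × ℝ → ℝ) : ℝ≥0∞ :=
  (∫⁻ q in D, ENNReal.ofReal (|f q| ^ e * W q)) ^ (1 / e)

/-- The operator `s_n^{i,j}(w; f, x)` built from the Christoffel–Darboux kernel of the
orthonormal polynomials `pij` of the weight `J_{i,j} w`. -/
def snOp (w : ℝ → ℝ) (pij : ℕ → Polynomial ℝ) (i j : ℝ) (n : ℕ) (f : ℝ → ℝ) (x : ℝ) : ℝ :=
  Jw (i/2) (j/2) x * ∫ y in Icc (-1:ℝ) 1, f y * CDK pij n x y * Jw (i/2) (j/2) y * w y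

/-- Substitution `(x, y) ↦ (2 x y, x² + y² - 1)` on two-variable polynomials. -/
def quadSub (P : MvPolynomial (Fin 2) ℝ) : MvPolynomial (Fin 2) ℝ :=
  MvPolynomial.aeval
    ![2 * MvPolynomial.X 0 * MvPolynomial.X 1,
      MvPolynomial.X 0 ^ 2 + MvPolynomial.X 1 ^ 2 - 1] P

/-- A one-variable polynomial viewed as a polynomial in the first variable. -/
def polyX (q : Polynomial ℝ) : MvPolynomial (Fin 2) ℝ :=
  Polynomial.aeval (MvPolynomial.X 0) q

/-- A one-variable polynomial viewed as a polynomial in the second variable. -/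
def polyY (q : Polynomial ℝ) : MvPolynomial (Fin 2) ℝ :=
  Polynomial.aeval (MvPolynomial.X 1) q

open Polynomial in
/-- Weighted inner product of two polynomials. -/
def ipJ (c d : ℝ) (f g : Polynomial ℝ) : ℝ :=
  ∫ x in Icc (-1:ℝ) 1, f.eval x * g.eval x * Jw c d x

/-- Orthonormal sequence for the Jacobi weight, without sign condition. -/
def ONPJ (c d : ℝ) (p : ℕ → Polynomial ℝ) : Prop :=
  (∀ n, (p n).natDegree = n) ∧ (∀ n m, ipJ c d (p n) (p m) = if n = m then 1 else 0)

lemma Jw_nonneg {c d x : ℝ} (hx : x ∈ Icc (-1:ℝ) 1) : 0 ≤ Jw c d x := by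
  have h1 : 0 ≤ 1 - x := by linarith [hx.2]
  have h2 : 0 ≤ 1 + x := by linarith [hx.1]
  unfold Jw; positivity

lemma Jw_integrableOn {c d : ℝ} (hc : -1 < c) (hd : -1 < d) :
    IntegrableOn (Jw c d) (Icc (-1:ℝ) 1) := by
  have e : Icc (-1:ℝ) 1 = Icc (-1) 0 ∪ Icc 0 1 := by
    rw [Icc_union_Icc_eq_Icc] <;> norm_num
  rw [e]
  apply IntegrableOn.union
  · have h1 : IntegrableOn (fun x : ℝ => (1 + x) ^ d) (Icc (-1:ℝ) 0) := by
      have := (intervalIntegral.intervalIntegrable_rpow' (a := 0) (b := 1) hd).comp_add_left (c := 1)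
      rw [← intervalIntegrable_iff_integrableOn_Icc_of_le (by norm_num)]
      simpa using this
    apply IntegrableOn.continuousOn_mul _ h1 isCompact_Icc
    apply ContinuousOn.rpow_const (by fun_prop)
    intro x hx
    left
    have := hx.2
    linarith
  · have h1 : IntegrableOn (fun x : ℝ => (1 - x) ^ c) (Icc (0:ℝ) 1) := by
      have := (intervalIntegral.intervalIntegrable_rpow' (a := 0) (b := 1) hc).comp_sub_left (c := 1)
      rw [← intervalIntegrable_iff_integrableOn_Icc_of_le (by norm_num)]
      simpa using this.symm
    apply IntegrableOn.mul_continuousOn h1 _ isCompact_Icc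
    apply ContinuousOn.rpow_const (by fun_prop)
    intro x hx
    left
    have := hx.1
    linarith

lemma polyJw_integrableOn {c d : ℝ} (hc : -1 < c) (hd : -1 < d) (f : Polynomial ℝ) :
    IntegrableOn (fun x => f.eval x * Jw c d x) (Icc (-1:ℝ) 1) :=
  IntegrableOn.continuousOn_mul f.continuous.continuousOn (Jw_integrableOn hc hd) isCompact_Icc

lemma ipJ_integrableOn {c d : ℝ} (hc : -1 < c) (hd : -1 < d) (f g : Polynomial ℝ) :
    IntegrableOn (fun x => f.eval x * g.eval x * Jw c d x) (Icc (-1:ℝ) 1) := by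
  simpa using polyJw_integrableOn hc hd (f * g)

lemma ipJ_comm (c d : ℝ) (f g : Polynomial ℝ) : ipJ c d f g = ipJ c d g f := by
  unfold ipJ; congr 1; ext x; ring

lemma ipJ_add {c d : ℝ} (hc : -1 < c) (hd : -1 < d) (f g h : Polynomial ℝ) :
    ipJ c d (f + g) h = ipJ c d f h + ipJ c d g h := by
  unfold ipJ
  rw [← integral_add (ipJ_integrableOn hc hd f h) (ipJ_integrableOn hc hd g h)]
  congr 1; ext x; simp; ring

lemma ipJ_smul (c d r : ℝ) (f h : Polynomial ℝ) :
    ipJ c d (r • f) h = r * ipJ c d f h := by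
  unfold ipJ
  rw [← integral_const_mul]
  congr 1; ext x; simp; ring

lemma ipJ_mul_left (c d : ℝ) (f g h : Polynomial ℝ) :
    ipJ c d (f * g) h = ipJ c d f (g * h) := by
  unfold ipJ; congr 1; ext x; simp only [Polynomial.eval_mul]; ring

/-- bilinear version -/
def ipJL {c d : ℝ} (hc : -1 < c) (hd : -1 < d) (h : Polynomial ℝ) : Polynomial ℝ →ₗ[ℝ] ℝ where
  toFun f := ipJ c d f h
  map_add' f g := ipJ_add hc hd f g h
  map_smul' r f := by simpa using ipJ_smul c d r f h

lemma ipJ_sub {c d : ℝ} (hc : -1 < c) (hd : -1 < d) (f g h : Polynomial ℝ) :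
    ipJ c d (f - g) h = ipJ c d f h - ipJ c d g h := map_sub (ipJL hc hd h) f g

lemma ipJ_sum {c d : ℝ} (hc : -1 < c) (hd : -1 < d) {ι : Type*} (s : Finset ι)
    (f : ι → Polynomial ℝ) (h : Polynomial ℝ) :
    ipJ c d (∑ k ∈ s, f k) h = ∑ k ∈ s, ipJ c d (f k) h := map_sum (ipJL hc hd h) f s

lemma ipJ_smul_right (c d r : ℝ) (f h : Polynomial ℝ) :
    ipJ c d f (r • h) = r * ipJ c d f h := by
  rw [ipJ_comm, ipJ_smul, ipJ_comm]

lemma ONPJ.ne_zero {c d : ℝ} {p : ℕ → Polynomial ℝ} (hp : ONPJ c d p) (n : ℕ) : p n ≠ 0 := by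
  intro h
  have := hp.2 n n
  simp [h, ipJ] at this

/-- existence of expansion -/
lemma ONPJ.exists_expand {c d : ℝ} {p : ℕ → Polynomial ℝ}
    (hp : ONPJ c d p) : ∀ (m : ℕ) (f : Polynomial ℝ), f.natDegree ≤ m →
    ∃ e : ℕ → ℝ, f = ∑ k ∈ Finset.range (m + 1), e k • p k := by
  have lead : ∀ n, (p n).coeff n ≠ 0 := by
    intro n
    have h := Polynomial.leadingCoeff_ne_zero.mpr (hp.ne_zero n)
    rwa [Polynomial.leadingCoeff, hp.1 n] at h
  intro m
  induction m with
  | zero =>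
    intro f hf
    refine ⟨fun _ => f.coeff 0 / (p 0).coeff 0, ?_⟩
    rw [Polynomial.eq_C_of_natDegree_le_zero hf]
    simp only [Finset.range_one, zero_add, Finset.sum_singleton]
    conv_rhs => rw [Polynomial.eq_C_of_natDegree_le_zero (hp.1 0).le]
    rw [Polynomial.smul_C]
    congr 1
    have := lead 0
    simp
    field_simp
  | succ m ih =>
    intro f hf
    set r := f.coeff (m+1) / (p (m+1)).coeff (m+1) with hr
    obtain ⟨e, he⟩ := ih (f - r • p (m+1)) (by
      rw [Polynomial.natDegree_le_iff_coeff_eq_zero]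
      intro N hN
      rcases Nat.eq_or_lt_of_le (Nat.succ_le_of_lt hN) with h | h
      · subst h
        have := lead (m+1)
        simp only [Polynomial.coeff_sub, Polynomial.coeff_smul, hr, smul_eq_mul]
        field_simp
        simp
      · have h1 : f.coeff N = 0 := Polynomial.coeff_eq_zero_of_natDegree_lt (by omega)
        have h2 : (p (m+1)).coeff N = 0 :=
          Polynomial.coeff_eq_zero_of_natDegree_lt (by rw [hp.1]; omega)
        simp [h1, h2])
    refine ⟨fun k => if k = m+1 then r else e k, ?_⟩
    rw [Finset.sum_range_succ]
    simp only [if_true]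
    have : ∑ k ∈ Finset.range (m+1), (if k = m+1 then r else e k) • p k
        = ∑ k ∈ Finset.range (m+1), e k • p k := by
      apply Finset.sum_congr rfl
      intro k hk
      rw [if_neg (by have := Finset.mem_range.mp hk; omega)]
    rw [this, ← he]
    ring

lemma ONPJ.expand {c d : ℝ} (hc : -1 < c) (hd : -1 < d) {p : ℕ → Polynomial ℝ}
    (hp : ONPJ c d p) {m : ℕ} {f : Polynomial ℝ} (hf : f.natDegree ≤ m) :
    f = ∑ k ∈ Finset.range (m + 1), ipJ c d f (p k) • p k := by
  obtain ⟨e, he⟩ := hp.exists_expand m f hf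
  have : ∀ k ∈ Finset.range (m+1), ipJ c d f (p k) = e k := by
    intro k hk
    rw [he, ipJ_sum hc hd]
    simp only [ipJ_smul, hp.2]
    simp only [mul_ite, mul_one, mul_zero, Finset.sum_ite_eq']
    rw [if_pos hk]
  conv_lhs => rw [he]
  apply Finset.sum_congr rfl
  intro k hk
  rw [this k hk]

lemma ONPJ.orth {c d : ℝ} (hc : -1 < c) (hd : -1 < d) {p : ℕ → Polynomial ℝ}
    (hp : ONPJ c d p) {n : ℕ} {f : Polynomial ℝ} (hf : f.natDegree < n) :
    ipJ c d f (p n) = 0 := by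
  rw [hp.expand hc hd (le_refl f.natDegree), ipJ_sum hc hd]
  apply Finset.sum_eq_zero
  intro k hk
  rw [ipJ_smul, hp.2, if_neg (by have := Finset.mem_range.mp hk; omega), mul_zero]

lemma hasDerivAt_one_sub_rpow {x : ℝ} (e : ℝ) (p1 : 0 < 1 - x) :
    HasDerivAt (fun x : ℝ => (1 - x) ^ e) (-e * (1-x)^(e-1)) x := by
  have h0 : HasDerivAt (fun x : ℝ => 1 - x) (-1) x := by
    simpa using (hasDerivAt_id x).const_sub 1
  convert h0.rpow_const (p := e) (Or.inl p1.ne') using 1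
  ring

lemma hasDerivAt_one_add_rpow {x : ℝ} (e : ℝ) (p1 : 0 < 1 + x) :
    HasDerivAt (fun x : ℝ => (1 + x) ^ e) (e * (1+x)^(e-1)) x := by
  have h0 : HasDerivAt (fun x : ℝ => 1 + x) 1 x := by
    simpa using (hasDerivAt_id x).const_add 1
  convert h0.rpow_const (p := e) (Or.inl p1.ne') using 1
  ring

/-- integration by parts. -/
lemma jacobi_parts {c d : ℝ} (hc : -1 < c) (hd : -1 < d) (f : Polynomial ℝ) :
    ∫ x in Icc (-1:ℝ) 1, ((1 - Polynomial.X ^ 2) * Polynomial.derivative f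
      + (Polynomial.C (d - c) - Polynomial.C (c + d + 2) * Polynomial.X) * f).eval x * Jw c d x = 0 := by
  have key := intervalIntegral.integral_eq_sub_of_hasDerivAt_of_le (a := (-1:ℝ)) (b := 1)
    (f := fun x => (1 - x) ^ (c+1) * (1 + x) ^ (d+1) * f.eval x)
    (f' := fun x => ((1 - Polynomial.X ^ 2) * Polynomial.derivative f
      + (Polynomial.C (d - c) - Polynomial.C (c + d + 2) * Polynomial.X) * f).eval x * Jw c d x)
    (by norm_num) ?_ ?_ ?_
  · rw [integral_Icc_eq_integral_Ioc, ← intervalIntegral.integral_of_le (by norm_num), key]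
    have h1 : (0:ℝ) ^ (c+1) = 0 := Real.zero_rpow (by linarith)
    have h2 : (0:ℝ) ^ (d+1) = 0 := Real.zero_rpow (by linarith)
    simp [h1, h2]
  · apply ContinuousOn.mul
    · apply ContinuousOn.mul
      · exact ContinuousOn.rpow_const (by fun_prop) (fun x hx => Or.inr (by linarith))
      · exact ContinuousOn.rpow_const (by fun_prop) (fun x hx => Or.inr (by linarith))
    · exact f.continuous.continuousOn
  · intro x hx
    have p1 : 0 < 1 - x := by linarith [hx.2]
    have p2 : 0 < 1 + x := by linarith [hx.1]
    have d1 := hasDerivAt_one_sub_rpow (c+1) p1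
    have d2 := hasDerivAt_one_add_rpow (d+1) p2
    refine ((d1.mul d2).mul (f.hasDerivAt x)).congr_deriv ?_
    simp only [Jw, Pi.mul_apply, Polynomial.eval_add, Polynomial.eval_mul, Polynomial.eval_sub,
      Polynomial.eval_one, Polynomial.eval_pow, Polynomial.eval_X, Polynomial.eval_C]
    rw [Real.rpow_add p1, Real.rpow_add p2, Real.rpow_one, Real.rpow_one,
      add_sub_cancel_right, add_sub_cancel_right]
    ring
  · rw [intervalIntegrable_iff_integrableOn_Icc_of_le (by norm_num)]
    exact polyJw_integrableOn hc hd _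

/-- Jacobi operator. -/
def jacL (c d : ℝ) (f : Polynomial ℝ) : Polynomial ℝ :=
  (1 - Polynomial.X ^ 2) * Polynomial.derivative (Polynomial.derivative f)
    + (Polynomial.C (d - c) - Polynomial.C (c + d + 2) * Polynomial.X) * Polynomial.derivative f

lemma jacL_parts {c d : ℝ} (hc : -1 < c) (hd : -1 < d) (f g : Polynomial ℝ) :
    ipJ c d (jacL c d f) g =
      - ipJ c d ((1 - Polynomial.X ^ 2) * Polynomial.derivative f) (Polynomial.derivative g) := by
  have h := jacobi_parts hc hd (Polynomial.derivative f * g)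
  have h2 : ipJ c d (jacL c d f) g
    + ipJ c d ((1 - Polynomial.X ^ 2) * Polynomial.derivative f) (Polynomial.derivative g) = 0 := by
    unfold ipJ
    rw [← integral_add (ipJ_integrableOn hc hd _ _) (ipJ_integrableOn hc hd _ _), ← h]
    congr 1; ext x
    simp [jacL]
    ring
  linarith

lemma jacL_symm {c d : ℝ} (hc : -1 < c) (hd : -1 < d) (f g : Polynomial ℝ) :
    ipJ c d (jacL c d f) g = ipJ c d f (jacL c d g) := by
  rw [jacL_parts hc hd, ipJ_comm c d f, jacL_parts hc hd]
  congr 1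
  unfold ipJ; congr 1; ext x; simp only [Polynomial.eval_mul]; ring

lemma jacL_coeff (c d : ℝ) (f : Polynomial ℝ) (n : ℕ) (hf : f.natDegree ≤ n) :
    (jacL c d f).coeff n = -((n:ℝ) * (n + c + d + 1)) * f.coeff n ∧ (jacL c d f).natDegree ≤ n := by
  have e : ∀ k, (jacL c d f).coeff k = ((k:ℝ)+2)*(k+1) * f.coeff (k+2) + (d-c)*(k+1)*f.coeff (k+1)
      - (k * (k + c + d + 1)) * f.coeff k := by
    intro k
    unfold jacL
    rw [sub_mul, sub_mul, one_mul]
    simp only [Polynomial.coeff_add, Polynomial.coeff_sub, mul_assoc, Polynomial.coeff_C_mul,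
      Polynomial.coeff_X_pow_mul', Polynomial.coeff_derivative]
    rcases k with _ | _ | k
    · simp; ring
    · simp [Polynomial.coeff_X_mul, Polynomial.coeff_derivative]; ring
    · simp [Polynomial.coeff_X_mul, Polynomial.coeff_derivative]; ring
  constructor
  · rw [e, Polynomial.coeff_eq_zero_of_natDegree_lt (n := n+2) (by omega),
      Polynomial.coeff_eq_zero_of_natDegree_lt (n := n+1) (by omega)]
    ring
  · rw [Polynomial.natDegree_le_iff_coeff_eq_zero]
    intro N hN
    rw [e, Polynomial.coeff_eq_zero_of_natDegree_lt (n := N+2) (by omega),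
      Polynomial.coeff_eq_zero_of_natDegree_lt (n := N+1) (by omega),
      Polynomial.coeff_eq_zero_of_natDegree_lt (n := N) (by omega)]
    ring

lemma ONPJ.ode {c d : ℝ} (hc : -1 < c) (hd : -1 < d) {p : ℕ → Polynomial ℝ}
    (hp : ONPJ c d p) (n : ℕ) :
    jacL c d (p n) = (-((n:ℝ) * (n + c + d + 1))) • p n := by
  have h1 := jacL_coeff c d (p n) n (hp.1 n).le
  have h2 := hp.expand hc hd h1.2
  rw [Finset.sum_range_succ, Finset.sum_eq_zero, zero_add] at h2
  · have h3 := h1.1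
    rw [h2] at h3 ⊢
    simp only [Polynomial.coeff_smul, smul_eq_mul] at h3
    have lead : (p n).coeff n ≠ 0 := by
      have h := Polynomial.leadingCoeff_ne_zero.mpr (hp.ne_zero n)
      rwa [Polynomial.leadingCoeff, hp.1 n] at h
    rw [mul_right_cancel₀ lead h3]
  · intro k hk
    have hk := Finset.mem_range.mp hk
    rw [jacL_symm hc hd, ipJ_comm, hp.orth hc hd, zero_smul]
    exact lt_of_le_of_lt (jacL_coeff c d (p k) k (hp.1 k).le).2 hk

lemma ONPJ.energy {c d : ℝ} (hc : -1 < c) (hd : -1 < d) {p : ℕ → Polynomial ℝ}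
    (hp : ONPJ c d p) (n : ℕ) :
    ipJ c d ((1 - Polynomial.X ^ 2) * Polynomial.derivative (p n)) (Polynomial.derivative (p n))
      = (n:ℝ) * (n + c + d + 1) := by
  have h := jacL_parts hc hd (p n) (p n)
  rw [hp.ode hc hd, ipJ_smul, hp.2] at h
  simp at h
  linarith

lemma gron_aux {D : Set ℝ} (hD : Convex ℝ D) {F F' S S' : ℝ → ℝ}
    (hF : ∀ x ∈ D, HasDerivAt F (F' x) x) (hS : ∀ x ∈ D, HasDerivAt S (S' x) x)
    (h0 : ∀ x ∈ D, 0 ≤ F x) (hb : ∀ x ∈ D, |F' x| ≤ S' x * F x) :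
    ∀ x ∈ D, ∀ y ∈ D, F x ≤ F y * Real.exp |S x - S y| := by
  have hd1 : ∀ x ∈ D, HasDerivAt (fun x => F x * Real.exp (-S x))
      ((F' x - S' x * F x) * Real.exp (-S x)) x := by
    intro x hx
    refine ((hF x hx).mul ((hS x hx).neg.exp)).congr_deriv ?_
    simp only [Pi.neg_apply]
    ring
  have hd2 : ∀ x ∈ D, HasDerivAt (fun x => F x * Real.exp (S x))
      ((F' x + S' x * F x) * Real.exp (S x)) x := by
    intro x hx
    refine ((hF x hx).mul ((hS x hx).exp)).congr_deriv ?_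
    ring
  have anti : AntitoneOn (fun x => F x * Real.exp (-S x)) D := by
    apply antitoneOn_of_deriv_nonpos hD
    · exact fun x hx => (hd1 x hx).continuousAt.continuousWithinAt
    · exact fun x hx => (hd1 x (interior_subset hx)).differentiableAt.differentiableWithinAt
    · intro x hx
      have hx := interior_subset hx
      rw [(hd1 x hx).deriv]
      have := (abs_le.mp (hb x hx)).2
      exact mul_nonpos_of_nonpos_of_nonneg (by linarith) (Real.exp_pos _).le
  have mono : MonotoneOn (fun x => F x * Real.exp (S x)) D := by
    apply monotoneOn_of_deriv_nonneg hD
    · exact fun x hx => (hd2 x hx).continuousAt.continuousWithinAt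
    · exact fun x hx => (hd2 x (interior_subset hx)).differentiableAt.differentiableWithinAt
    · intro x hx
      have hx := interior_subset hx
      rw [(hd2 x hx).deriv]
      have := (abs_le.mp (hb x hx)).1
      exact mul_nonneg (by linarith) (Real.exp_pos _).le
  intro x hx y hy
  rcases le_total y x with h | h
  · have h1 : F x * Real.exp (-S x) ≤ F y * Real.exp (-S y) := anti hy hx h
    have h2 : F x ≤ F y * Real.exp (S x - S y) := by
      calc F x = (F x * Real.exp (-S x)) * Real.exp (S x) := by
            rw [mul_assoc, ← Real.exp_add]; simp
        _ ≤ (F y * Real.exp (-S y)) * Real.exp (S x) := by gcongr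
        _ = F y * Real.exp (S x - S y) := by rw [mul_assoc, ← Real.exp_add]; ring_nf
    refine h2.trans ?_
    have := h0 y hy
    gcongr
    exact le_abs_self _
  · have h1 : F x * Real.exp (S x) ≤ F y * Real.exp (S y) := mono hx hy h
    have h2 : F x ≤ F y * Real.exp (S y - S x) := by
      calc F x = (F x * Real.exp (S x)) * Real.exp (-S x) := by
            rw [mul_assoc, ← Real.exp_add]; simp
        _ ≤ (F y * Real.exp (S y)) * Real.exp (-S x) := by gcongr
        _ = F y * Real.exp (S y - S x) := by rw [mul_assoc, ← Real.exp_add]; ring_nf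
    refine h2.trans ?_
    have := h0 y hy
    gcongr
    rw [abs_sub_comm]
    exact le_abs_self _

/-- The unweighted energy. -/
def eG (l : ℝ) (f : Polynomial ℝ) (x : ℝ) : ℝ :=
  l * f.eval x ^ 2 + (1 - x ^ 2) * (Polynomial.derivative f).eval x ^ 2

/-- The modified weighted energy. -/
def eH (c d l : ℝ) (f : Polynomial ℝ) (x : ℝ) : ℝ :=
  Jw (c + 1/2) (d + 1/2) x *
    (eG l f x - ((c + d + 1) * x + (c - d)) * (f.eval x * (Polynomial.derivative f).eval x))

/-- The Jacobi equation, pointwise. -/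
def JODE (c d l : ℝ) (f : Polynomial ℝ) : Prop := ∀ x : ℝ,
  (1 - x ^ 2) * (Polynomial.derivative (Polynomial.derivative f)).eval x =
    - l * f.eval x + ((c - d) + (c + d + 2) * x) * (Polynomial.derivative f).eval x

lemma ONPJ.jode {c d : ℝ} (hc : -1 < c) (hd : -1 < d) {p : ℕ → Polynomial ℝ}
    (hp : ONPJ c d p) (n : ℕ) : JODE c d ((n:ℝ) * (n + c + d + 1)) (p n) := by
  intro x
  have h := congrArg (Polynomial.eval x) (hp.ode hc hd n)
  simp [jacL] at h
  linarith

lemma eG_deriv {c d l : ℝ} {f : Polynomial ℝ} (hf : JODE c d l f) (x : ℝ) :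
    HasDerivAt (eG l f)
      (2 * (Polynomial.derivative f).eval x ^ 2 * ((c + d + 1) * x + (c - d))) x := by
  have h1 := f.hasDerivAt x
  have h2 := (Polynomial.derivative f).hasDerivAt x
  have h3 : HasDerivAt (fun x : ℝ => 1 - x ^ 2) (-(2 * x)) x := by
    simpa using (hasDerivAt_pow 2 x).const_sub 1
  refine (((h1.pow 2).const_mul l).add (h3.mul (h2.pow 2))).congr_deriv ?_
  have := hf x
  simp only [Pi.pow_apply]
  push_cast
  linear_combination (2 * (Polynomial.derivative f).eval x) * this

lemma eH_deriv {c d l : ℝ} {f : Polynomial ℝ} (hf : JODE c d l f) {x : ℝ}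
    (p1 : 0 < 1 - x) (p2 : 0 < 1 + x) :
    HasDerivAt (eH c d l f)
      (- (Jw (c + 1/2) (d + 1/2) x * ((c + 1/2) / (1 - x) + (d + 1/2) / (1 + x)) *
        (f.eval x * (Polynomial.derivative f).eval x))) x := by
  have h1 := f.hasDerivAt x
  have h2 := (Polynomial.derivative f).hasDerivAt x
  have h3 : HasDerivAt (fun x : ℝ => (c + d + 1) * x + (c - d)) (c + d + 1) x := by
    simpa using ((hasDerivAt_id x).const_mul (c + d + 1)).add_const (c - d)
  have h4 := (hasDerivAt_one_sub_rpow (c+1/2) p1).mul (hasDerivAt_one_add_rpow (d+1/2) p2)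
  refine (h4.mul ((eG_deriv hf x).sub (h3.mul (h1.mul h2)))).congr_deriv ?_
  have := hf x
  simp only [Pi.mul_apply, Pi.sub_apply, Jw, eG]
  rw [Real.rpow_sub_one p1.ne', Real.rpow_sub_one p2.ne']
  set u := (1 - x) ^ (c + 1/2)
  set v := (1 + x) ^ (d + 1/2)
  have e : (Polynomial.derivative (Polynomial.derivative f)).eval x =
    (- l * f.eval x + ((c - d) + (c + d + 2) * x) * (Polynomial.derivative f).eval x)
      / ((1 - x) * (1 + x)) := by
    rw [eq_div_iff (by positivity), ← this]; ring
  rw [e]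
  field_simp
  ring

/-- Cauchy-Schwarz for the mixed term. -/
lemma mixed_le {l x : ℝ} (hl : 0 < l) (hx0 : 0 ≤ x) (hx1 : x < 1) (f : Polynomial ℝ) :
    2 * √(l * (1 - x)) * |f.eval x * (Polynomial.derivative f).eval x| ≤ eG l f x := by
  unfold eG
  have h1 : 0 < 1 - x := by linarith
  set a := f.eval x
  set b := (Polynomial.derivative f).eval x
  rw [Real.sqrt_mul hl.le, abs_mul]
  have e1 := Real.sq_sqrt hl.le
  have e2 := Real.sq_sqrt h1.le
  have h2 := sq_nonneg (√l * |a| - √(1-x) * |b|)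
  have h3 : (1 - x) * b ^ 2 ≤ (1 - x^2) * b^2 := by
    apply mul_le_mul_of_nonneg_right _ (sq_nonneg _)
    nlinarith
  have h4 : l * a^2 + (1-x) * b^2 = (√l * |a|)^2 + (√(1-x) * |b|)^2 := by
    rw [mul_pow, mul_pow, e1, e2, sq_abs, sq_abs]
  nlinarith

lemma eG_nonneg {l x : ℝ} (hl : 0 < l) (hx0 : 0 ≤ x) (hx1 : x ≤ 1) (f : Polynomial ℝ) :
    0 ≤ eG l f x := by
  unfold eG
  have : 0 ≤ 1 - x^2 := by nlinarith
  positivity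

/-- comparison of eH and h * eG. -/
lemma eH_compare {c d l M x : ℝ} (hl : 0 < l) (hx0 : 0 ≤ x) (hx1 : x < 1) (hM : 1 ≤ M)
    (hK : (|c + d + 1| + |c - d|) ≤ M) (hr : M ^ 2 ≤ l * (1 - x)) (f : Polynomial ℝ) :
    Jw (c + 1/2) (d + 1/2) x * eG l f x / 2 ≤ eH c d l f x ∧
    eH c d l f x ≤ 3 / 2 * (Jw (c + 1/2) (d + 1/2) x * eG l f x) := by
  have h1 := mixed_le hl hx0 hx1 f
  have h2 : M ≤ √(l * (1-x)) := Real.le_sqrt_of_sq_le hr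
  have hw : 0 ≤ Jw (c + 1/2) (d + 1/2) x := Jw_nonneg ⟨by linarith, hx1.le⟩
  unfold eH
  set z := f.eval x * (Polynomial.derivative f).eval x
  have h3 : |((c + d + 1) * x + (c - d)) * z| ≤ eG l f x / 2 := by
    rw [abs_mul]
    have : |(c + d + 1) * x + (c - d)| ≤ M := by
      refine (abs_add_le _ _).trans (le_trans ?_ hK)
      rw [abs_mul, abs_of_nonneg hx0]
      have := abs_nonneg (c+d+1)
      nlinarith
    have h5 : |(c + d + 1) * x + (c - d)| * |z| ≤ √(l * (1-x)) * |z| := by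
      gcongr; linarith
    linarith
  have h4 := abs_le.mp h3
  constructor
  · nlinarith [mul_nonneg hw (sub_nonneg.mpr h4.2)]
  · nlinarith [mul_nonneg hw (sub_nonneg.mpr h4.1)]

lemma eH_gron {c d l M : ℝ} (hc : -(1/2) ≤ c) (hd : -(1/2) ≤ d) (hl : 0 < l) (hM : 1 ≤ M)
    (hK : (|c + d + 1| + |c - d|) ≤ M) {f : Polynomial ℝ} (hf : JODE c d l f)
    {x y : ℝ} (hx0 : 0 ≤ x) (hx1 : x < 1) (hrx : M ^ 2 ≤ l * (1 - x))
    (hy0 : 0 ≤ y) (hy1 : y < 1) (hry : M ^ 2 ≤ l * (1 - y)) :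
    eH c d l f x ≤ eH c d l f y * Real.exp (2 * (c + d + 1)) := by
  set D : Set ℝ := Icc 0 (1 - M^2 / l) with hDdef
  have hMl : 0 < M^2 / l := by positivity
  have memD : ∀ z, 0 ≤ z → M ^ 2 ≤ l * (1 - z) → z ∈ D := by
    intro z h0 h1
    refine ⟨h0, ?_⟩
    have : M^2 / l ≤ 1 - z := by rw [div_le_iff₀ hl]; linarith
    linarith
  have ofD : ∀ z ∈ D, 0 ≤ z ∧ z < 1 ∧ M ^ 2 ≤ l * (1 - z) := by
    intro z hz
    refine ⟨hz.1, by linarith [hz.2], ?_⟩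
    have : M^2 / l ≤ 1 - z := by linarith [hz.2]
    rw [div_le_iff₀ hl] at this; linarith
  set A := c + d + 1 with hA
  have hA0 : 0 ≤ A := by linarith
  have main := gron_aux (convex_Icc 0 (1 - M^2/l))
    (F := eH c d l f)
    (F' := fun x => - (Jw (c + 1/2) (d + 1/2) x * ((c + 1/2) / (1 - x) + (d + 1/2) / (1 + x)) *
        (f.eval x * (Polynomial.derivative f).eval x)))
    (S := fun x => 2 * A / √l * (1 - x) ^ (-(1/2) : ℝ))
    (S' := fun x => A / √l * (1 - x) ^ (-(1/2) - 1 : ℝ)) ?_ ?_ ?_ ?_ x (memD x hx0 hrx) y (memD y hy0 hry)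
  · refine main.trans ?_
    have hH : 0 ≤ eH c d l f y := by
      refine le_trans ?_ (eH_compare hl hy0 hy1 hM hK hry f).1
      have := Jw_nonneg (c := c+1/2) (d := d+1/2) (x := y) ⟨by linarith, hy1.le⟩
      have := eG_nonneg hl hy0 hy1.le f
      positivity
    have hS : ∀ z, 0 ≤ z → z < 1 → M ^ 2 ≤ l * (1 - z) →
        0 ≤ 2 * A / √l * (1 - z) ^ (-(1/2) : ℝ) ∧ 2 * A / √l * (1 - z) ^ (-(1/2) : ℝ) ≤ 2 * A := by
      intro z h0 h1 h2
      have hz : 0 < 1 - z := by linarith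
      refine ⟨by positivity, ?_⟩
      rw [Real.rpow_neg hz.le, ← Real.sqrt_eq_rpow, ← div_eq_mul_inv, div_div,
        ← Real.sqrt_mul hl.le]
      apply div_le_self (by positivity)
      exact hM.trans (Real.le_sqrt_of_sq_le h2)
    have a1 := hS x hx0 hx1 hrx
    have a2 := hS y hy0 hy1 hry
    gcongr
    rw [abs_le]
    constructor <;> linarith
  · intro z hz
    obtain ⟨h0, h1, h2⟩ := ofD z hz
    exact eH_deriv hf (by linarith) (by linarith)
  · intro z hz
    obtain ⟨h0, h1, h2⟩ := ofD z hz
    refine ((hasDerivAt_one_sub_rpow (-(1/2)) (by linarith)).const_mul (2 * A / √l)).congr_deriv ?_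
    ring
  · intro z hz
    obtain ⟨h0, h1, h2⟩ := ofD z hz
    refine le_trans ?_ (eH_compare hl h0 h1 hM hK h2 f).1
    have := Jw_nonneg (c := c+1/2) (d := d+1/2) (x := z) ⟨by linarith, h1.le⟩
    have := eG_nonneg hl h0 h1.le f
    positivity
  · intro z hz
    obtain ⟨h0, h1, h2⟩ := ofD z hz
    have hz : 0 < 1 - z := by linarith
    have hz2 : 0 < 1 + z := by linarith
    have c1 := (eH_compare hl h0 h1 hM hK h2 f).1
    have c2 := mixed_le hl h0 h1 f
    have hw := Jw_nonneg (c := c+1/2) (d := d+1/2) (x := z) ⟨by linarith, h1.le⟩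
    have c3 : (c + 1/2) / (1 - z) + (d + 1/2) / (1 + z) ≤ A / (1 - z) := by
      have : (d + 1/2) / (1 + z) ≤ (d + 1/2) / (1 - z) := by
        apply div_le_div_of_nonneg_left _ hz (by linarith)
        linarith
      have e : A / (1 - z) = (c + 1/2) / (1 - z) + (d + 1/2) / (1 - z) := by
        rw [← add_div]; congr 1; rw [hA]; ring
      linarith
    have c4 : 0 ≤ (c + 1/2) / (1 - z) + (d + 1/2) / (1 + z) := by
      have : 0 ≤ c + 1/2 := by linarith
      have : 0 ≤ d + 1/2 := by linarith
      positivity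
    rw [abs_neg, abs_mul, abs_of_nonneg (mul_nonneg hw c4)]
    set Z := |f.eval z * (Polynomial.derivative f).eval z|
    set W := Jw (c + 1/2) (d + 1/2) z
    have hsl : 0 < √l := Real.sqrt_pos.mpr hl
    have hsz : 0 < √(1-z) := Real.sqrt_pos.mpr hz
    have e1 : (1 - z) ^ (-(1/2) - 1 : ℝ) = 1 / (√(1-z) * (1 - z)) := by
      rw [Real.rpow_sub_one hz.ne', Real.rpow_neg hz.le, ← Real.sqrt_eq_rpow]
      field_simp
    rw [Real.sqrt_mul hl.le] at c2
    rw [e1]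
    calc W * ((c + 1/2) / (1 - z) + (d + 1/2) / (1 + z)) * Z ≤ W * (A / (1 - z)) * Z := by
          have : 0 ≤ Z := abs_nonneg _
          gcongr
      _ = A / √l * (1 / (√(1-z) * (1 - z))) * (W * (2 * (√l * √(1-z)) * Z) / 2) := by
          field_simp
      _ ≤ A / √l * (1 / (√(1-z) * (1 - z))) * (W * eG l f z / 2) := by gcongr
      _ ≤ _ := by gcongr

lemma Jw_half_le {c d y : ℝ} (h0 : 0 ≤ y) (h1 : y < 1) :
    Jw (c + 1/2) (d + 1/2) y ≤ Jw c d y := by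
  have p1 : 0 < 1 - y := by linarith
  have p2 : 0 < 1 + y := by linarith
  have e : Jw (c + 1/2) (d + 1/2) y = Jw c d y * ((1 - y) * (1 + y)) ^ (1/2 : ℝ) := by
    unfold Jw
    rw [Real.rpow_add p1, Real.rpow_add p2, Real.mul_rpow p1.le p2.le]
    ring
  rw [e]
  apply mul_le_of_le_one_right (Jw_nonneg ⟨by linarith, h1.le⟩)
  apply Real.rpow_le_one (by positivity) (by nlinarith) (by norm_num)

lemma mid_bound {c d l M : ℝ} (hc : -(1/2) ≤ c) (hd : -(1/2) ≤ d) (hl : 0 < l) (hM : 1 ≤ M)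
    (hK : (|c + d + 1| + |c - d|) ≤ M) {f : Polynomial ℝ} (hf : JODE c d l f)
    (hn : ipJ c d f f = 1)
    (he : ipJ c d ((1 - Polynomial.X ^ 2) * Polynomial.derivative f) (Polynomial.derivative f) = l)
    (hMl : M ^ 2 ≤ l * (1 / 2))
    {x : ℝ} (hx0 : 0 ≤ x) (hx1 : x < 1) (hrx : M ^ 2 ≤ l * (1 - x)) :
    Jw (c + 1/2) (d + 1/2) x * eG l f x ≤ 12 * Real.exp (2 * (c + d + 1)) * l := by
  set E := Real.exp (2 * (c + d + 1)) with hE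
  have hE0 : 0 < E := Real.exp_pos _
  have hc' : -1 < c := by linarith
  have hd' : -1 < d := by linarith
  have pt : ∀ y ∈ Icc (0:ℝ) (1/2), eH c d l f x ≤ E * (3/2) * (eG l f y * Jw c d y) := by
    intro y hy
    have hy1 : y < 1 := by linarith [hy.2]
    have hry : M ^ 2 ≤ l * (1 - y) := by
      refine hMl.trans ?_
      gcongr
      linarith [hy.2]
    have h1 := eH_gron hc hd hl hM hK hf hx0 hx1 hrx hy.1 hy1 hry
    have h2 := (eH_compare hl hy.1 hy1 hM hK hry f).2
    have h3 : Jw (c + 1/2) (d + 1/2) y * eG l f y ≤ Jw c d y * eG l f y :=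
      mul_le_mul_of_nonneg_right (Jw_half_le hy.1 hy1) (eG_nonneg hl hy.1 hy1.le f)
    calc eH c d l f x ≤ eH c d l f y * E := h1
      _ ≤ (3/2 * (Jw c d y * eG l f y)) * E := by
          gcongr
          linarith
      _ = _ := by ring
  have hIntg : IntegrableOn (fun y => eG l f y * Jw c d y) (Icc (-1:ℝ) 1) := by
    have := polyJw_integrableOn hc' hd' (l • f^2 + (1 - Polynomial.X^2) * (Polynomial.derivative f)^2)
    simpa [eG] using this
  have htot : ∫ y in Icc (-1:ℝ) 1, eG l f y * Jw c d y = 2 * l := by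
    have : (∫ y in Icc (-1:ℝ) 1, eG l f y * Jw c d y) = l * ipJ c d f f +
        ipJ c d ((1 - Polynomial.X ^ 2) * Polynomial.derivative f) (Polynomial.derivative f) := by
      rw [← ipJ_smul]
      unfold ipJ
      rw [← integral_add (ipJ_integrableOn hc' hd' _ _) (ipJ_integrableOn hc' hd' _ _)]
      congr 1; ext y
      simp [eG]
      ring
    rw [this, hn, he]; ring
  have hsub : Icc (0:ℝ) (1/2) ⊆ Icc (-1) 1 := Icc_subset_Icc (by norm_num) (by norm_num)
  have h1 : ∫ y in Icc (0:ℝ) (1/2), eH c d l f x ≤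
      ∫ y in Icc (0:ℝ) (1/2), E * (3/2) * (eG l f y * Jw c d y) := by
    apply setIntegral_mono_on _ _ measurableSet_Icc pt
    · exact integrableOn_const (by simp)
    · exact (hIntg.mono_set hsub).const_mul _
  have h2 : ∫ y in Icc (0:ℝ) (1/2), (eG l f y * Jw c d y) ≤ 2 * l := by
    rw [← htot]
    apply setIntegral_mono_set hIntg _ (Filter.Eventually.of_forall hsub)
    filter_upwards [ae_restrict_mem measurableSet_Icc] with y hy
    have : 0 ≤ eG l f y := by
      unfold eG
      have : 0 ≤ 1 - y^2 := by nlinarith [hy.1, hy.2]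
      positivity
    exact mul_nonneg this (Jw_nonneg hy)
  rw [integral_const_mul] at h1
  have h3 : ∫ y in Icc (0:ℝ) (1/2), eH c d l f x = 1/2 * eH c d l f x := by
    simp
  rw [h3] at h1
  have h4 := (eH_compare hl hx0 hx1 hM hK hrx f).1
  have h5 : E * (3/2) * ∫ y in Icc (0:ℝ) (1/2), (eG l f y * Jw c d y) ≤ E * (3/2) * (2 * l) := by
    gcongr
  nlinarith

lemma trans_bound {c d l : ℝ} (hl : 0 < l) {f : Polynomial ℝ} (hf : JODE c d l f)
    {x0 x : ℝ} (h0 : 0 ≤ x0) (h1 : x0 ≤ x) (h2 : x < 1) :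
    eG l f x * (1 - x) ^ (2 * (|c + d + 1| + |c - d|)) ≤
      eG l f x0 * (1 - x0) ^ (2 * (|c + d + 1| + |c - d|)) := by
  set K := |c + d + 1| + |c - d| with hK
  have hder : ∀ z ∈ Icc x0 x, HasDerivAt (fun z => eG l f z * (1 - z) ^ (2 * K))
      (2 * (Polynomial.derivative f).eval z ^ 2 * ((c + d + 1) * z + (c - d)) * (1 - z) ^ (2 * K)
        + eG l f z * (-(2 * K) * (1 - z) ^ (2 * K - 1))) z := by
    intro z hz
    exact (eG_deriv hf z).mul (hasDerivAt_one_sub_rpow (2 * K) (by linarith [hz.2]))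
  have anti : AntitoneOn (fun z => eG l f z * (1 - z) ^ (2 * K)) (Icc x0 x) := by
    apply antitoneOn_of_deriv_nonpos (convex_Icc _ _)
    · exact fun z hz => (hder z hz).continuousAt.continuousWithinAt
    · exact fun z hz => (hder z (interior_subset hz)).differentiableAt.differentiableWithinAt
    · intro z hz
      have hz := interior_subset hz
      rw [(hder z hz).deriv]
      have p1 : 0 < 1 - z := by linarith [hz.2]
      have hz0 : 0 ≤ z := h0.trans hz.1
      rw [Real.rpow_sub_one p1.ne']
      have hw : 0 < (1 - z) ^ (2 * K) := Real.rpow_pos_of_pos p1 _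
      set w := (1 - z) ^ (2 * K)
      set b := (Polynomial.derivative f).eval z
      have k1 : (c + d + 1) * z + (c - d) ≤ K := by
        have := le_abs_self (c - d)
        have := le_abs_self (c + d + 1)
        have := abs_nonneg (c + d + 1)
        nlinarith [hz.2]
      have hK0 : 0 ≤ K := by positivity
      have k2 : (1 - z) * b ^ 2 ≤ eG l f z := by
        unfold eG
        have : (1 - z) * b ^ 2 ≤ (1 - z^2) * b^2 := by
          apply mul_le_mul_of_nonneg_right _ (sq_nonneg _)
          nlinarith
        have : 0 ≤ l * f.eval z ^ 2 := by positivity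
        linarith
      have k3 : 2 * b ^ 2 * ((c + d + 1) * z + (c - d)) * w ≤ 2 * b^2 * K * w := by gcongr
      have k4 : 2 * b^2 * K * w ≤ eG l f z * (2 * K * (w / (1 - z))) := by
        calc 2 * b^2 * K * w = ((1-z) * b^2) * (2 * K * (w / (1 - z))) := by field_simp
          _ ≤ _ := by gcongr
      linarith
  exact anti ⟨le_refl _, h1⟩ ⟨h1, le_refl _⟩ h1

lemma end_bound {c d l : ℝ} (hc : -1 < c) (hd : -1 < d) (hl : 0 < l) {f : Polynomial ℝ}
    (hf : JODE c d l f) {x1 : ℝ} (h0 : 0 ≤ x1) (h1 : x1 < 1)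
    (hs : l * 2 ^ |d| / (c + 1) * (1 - x1) ≤ 1 / 2) :
    ∀ x ∈ Icc x1 1, |f.eval x| ≤ 2 * |f.eval x1| := by
  obtain ⟨z, hz, hmax⟩ := isCompact_Icc.exists_isMaxOn (s := Icc x1 1) ⟨x1, le_refl _, h1.le⟩
    (f := fun x => |f.eval x|) (f.continuous.abs.continuousOn)
  set P := |f.eval z| with hP
  have hP0 : 0 ≤ P := abs_nonneg _
  have hmax' : ∀ x ∈ Icc x1 1, |f.eval x| ≤ P := fun x hx => hmax hx
  set K := l * P * 2 ^ |d| / (c + 1) with hK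
  have hc1 : 0 < c + 1 := by linarith
  have hK0 : 0 ≤ K := by positivity
  set g := Polynomial.derivative f
  have hder : ∀ x ∈ Ioo x1 1, HasDerivAt (fun x => (1 - x) ^ (c+1) * (1 + x) ^ (d+1) * g.eval x)
      (- l * Jw c d x * f.eval x) x := by
    intro x hx
    have p1 : 0 < 1 - x := by linarith [hx.2]
    have p2 : 0 < 1 + x := by linarith [hx.1]
    refine (((hasDerivAt_one_sub_rpow (c+1) p1).mul (hasDerivAt_one_add_rpow (d+1) p2)).mul
      (g.hasDerivAt x)).congr_deriv ?_
    simp only [Pi.mul_apply, Jw]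
    rw [Real.rpow_add p1, Real.rpow_add p2, Real.rpow_one, Real.rpow_one,
      add_sub_cancel_right, add_sub_cancel_right]
    have := hf x
    linear_combination ((1 - x) ^ c * (1 + x) ^ d) * this
  have hderK : ∀ x ∈ Ioo x1 1, HasDerivAt (fun x : ℝ => K * (1 - x) ^ (c+1))
      (-(K * (c+1) * (1 - x) ^ c)) x := by
    intro x hx
    have p1 : 0 < 1 - x := by linarith [hx.2]
    refine ((hasDerivAt_one_sub_rpow (c+1) p1).const_mul K).congr_deriv ?_
    rw [add_sub_cancel_right]; ring
  have hbd : ∀ x ∈ Ioo x1 1, |- l * Jw c d x * f.eval x| ≤ K * (c+1) * (1 - x) ^ c := by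
    intro x hx
    have p1 : 0 < 1 - x := by linarith [hx.2]
    have p2 : 1 ≤ 1 + x := by linarith [hx.1]
    have e : K * (c+1) * (1 - x)^c = l * ((1 - x)^c * 2 ^ |d|) * P := by
      rw [hK]; field_simp
    rw [e, abs_mul, abs_mul, abs_neg, abs_of_pos hl]
    have j1 : |Jw c d x| ≤ (1 - x)^c * 2 ^ |d| := by
      rw [abs_of_nonneg (Jw_nonneg ⟨by linarith, by linarith⟩)]
      unfold Jw
      gcongr
      calc (1 + x) ^ d ≤ (1 + x) ^ |d| := Real.rpow_le_rpow_of_exponent_le p2 (le_abs_self d)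
        _ ≤ 2 ^ |d| := by
          apply Real.rpow_le_rpow (by linarith) (by linarith [hx.2]) (abs_nonneg _)
    have j2 := hmax' x ⟨hx.1.le, hx.2.le⟩
    gcongr
  have cont1 : ContinuousOn (fun x => (1 - x) ^ (c+1) * (1 + x) ^ (d+1) * g.eval x) (Icc x1 1) := by
    apply ContinuousOn.mul
    · apply ContinuousOn.mul
      · exact ContinuousOn.rpow_const (by fun_prop) (fun x hx => Or.inr (by linarith))
      · exact ContinuousOn.rpow_const (by fun_prop) (fun x hx => Or.inr (by linarith))
    · exact g.continuous.continuousOn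
  have cont2 : ContinuousOn (fun x : ℝ => K * (1 - x) ^ (c+1)) (Icc x1 1) := by
    apply ContinuousOn.mul continuousOn_const
    exact ContinuousOn.rpow_const (by fun_prop) (fun x hx => Or.inr (by linarith))
  have z1 : (0:ℝ) ^ (c+1) = 0 := Real.zero_rpow (by linarith)
  have low : AntitoneOn (fun x => (1 - x) ^ (c+1) * (1 + x) ^ (d+1) * g.eval x
      + K * (1 - x) ^ (c+1)) (Icc x1 1) := by
    apply antitoneOn_of_deriv_nonpos (convex_Icc _ _) (cont1.add cont2)
    · intro x hx
      rw [interior_Icc] at hx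
      exact ((hder x hx).add (hderK x hx)).differentiableAt.differentiableWithinAt
    · intro x hx
      rw [interior_Icc] at hx
      have e := ((hder x hx).add (hderK x hx)).deriv
      rw [e]
      have := (abs_le.mp (hbd x hx)).2
      linarith
  have upp : MonotoneOn (fun x => (1 - x) ^ (c+1) * (1 + x) ^ (d+1) * g.eval x
      - K * (1 - x) ^ (c+1)) (Icc x1 1) := by
    apply monotoneOn_of_deriv_nonneg (convex_Icc _ _) (cont1.sub cont2)
    · intro x hx
      rw [interior_Icc] at hx
      exact ((hder x hx).sub (hderK x hx)).differentiableAt.differentiableWithinAt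
    · intro x hx
      rw [interior_Icc] at hx
      have e := ((hder x hx).sub (hderK x hx)).deriv
      rw [e]
      have := (abs_le.mp (hbd x hx)).1
      linarith
  have gb : ∀ x ∈ Ico x1 1, ‖g.eval x‖ ≤ K := by
    intro x hx
    have p1 : 0 < 1 - x := by linarith [hx.2]
    have p2 : 1 ≤ 1 + x := by linarith [hx.1]
    have a1 := low ⟨hx.1, hx.2.le⟩ (right_mem_Icc.mpr h1.le) hx.2.le
    have a2 := upp ⟨hx.1, hx.2.le⟩ (right_mem_Icc.mpr h1.le) hx.2.le
    simp only [sub_self, z1, zero_mul, mul_zero, add_zero] at a1 a2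
    have w1 : 0 < (1 - x) ^ (c+1) := Real.rpow_pos_of_pos p1 _
    have w2 : 1 ≤ (1 + x) ^ (d+1) := Real.one_le_rpow p2 (by linarith)
    set u := (1 - x) ^ (c+1)
    set v := (1 + x) ^ (d+1)
    have a3 : |v * g.eval x| ≤ K := by
      rw [abs_le]
      constructor
      · have : 0 ≤ u * (v * g.eval x + K) := by linarith
        have := nonneg_of_mul_nonneg_right this w1
        linarith
      · have : 0 ≤ u * (K - v * g.eval x) := by linarith
        have := nonneg_of_mul_nonneg_right this w1
        linarith
    rw [abs_mul, abs_of_pos (by linarith)] at a3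
    rw [Real.norm_eq_abs]
    have := abs_nonneg (g.eval x)
    nlinarith
  have mv := norm_image_sub_le_of_norm_deriv_le_segment' (f := fun x => f.eval x)
    (f' := fun x => g.eval x) (C := K) (a := x1) (b := 1)
    (fun x hx => (f.hasDerivAt x).hasDerivWithinAt) gb z hz
  rw [Real.norm_eq_abs] at mv
  have hKs : K * (z - x1) ≤ P / 2 := by
    calc K * (z - x1) ≤ K * (1 - x1) := by gcongr; exact hz.2
      _ = P * (l * 2 ^ |d| / (c + 1) * (1 - x1)) := by rw [hK]; ring
      _ ≤ P * (1/2) := by gcongr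
      _ = P / 2 := by ring
  have tri : P ≤ |f.eval z - f.eval x1| + |f.eval x1| := by
    have := abs_add_le (f.eval z - f.eval x1) (f.eval x1)
    simpa [hP] using this
  intro x hx
  have := hmax' x hx
  linarith

set_option maxHeartbeats 4000000 in
lemma big_n_bound {c d : ℝ} (hc : -(1/2) ≤ c) (hd : -(1/2) ≤ d) :
    ∃ C : ℝ, ∃ n0 : ℕ, ∀ p : ℕ → Polynomial ℝ, ONPJ c d p → ∀ n : ℕ, n0 ≤ n → ∀ x ∈ Icc (0:ℝ) 1,
      (p n).eval x ^ 2 * ((√(1 - x) + 1 / ((n:ℝ) + 1)) ^ 2) ^ (c + 1/2) ≤ C := by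
  have hc' : -1 < c := by linarith
  have hd' : -1 < d := by linarith
  set A := c + d + 1 with hA
  have hA0 : 0 ≤ A := by linarith
  set K := |c + d + 1| + |c - d| with hK
  have hK0 : 0 ≤ K := by positivity
  set M := max 1 K with hM
  have hM1 : 1 ≤ M := le_max_left _ _
  have hMK : K ≤ M := le_max_right _ _
  set E := Real.exp (2 * (c + d + 1)) with hE
  have hE0 : 0 < E := Real.exp_pos _
  have hc1 : 0 < c + 1 := by linarith
  have he0 : 0 ≤ c + 1/2 := by linarith
  set ε := min 1 ((c + 1) / (2 * 2 ^ |d| * (1 + A))) with hε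
  have hε0 : 0 < ε := by
    rw [hε]; apply lt_min (by norm_num); positivity
  have hε1 : ε ≤ 1 := min_le_left _ _
  have hε2 : ε ≤ (c + 1) / (2 * 2 ^ |d| * (1 + A)) := min_le_right _ _
  set Q := 12 * E * (M ^ 2 / ε) ^ (2 * K) with hQ
  obtain ⟨n0, hn0⟩ := exists_nat_ge (2 * M ^ 2)
  refine ⟨max (4 ^ (c + 1/2) * (12 * E)) (4 * Q * ((M + 1) ^ 2) ^ (c + 1/2)), n0 + 1, ?_⟩
  intro p hp n hn x hx
  have hn1 : (1:ℝ) ≤ n := by exact_mod_cast (by omega : 1 ≤ n)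
  have hnpos : (0:ℝ) < n := by linarith
  have hnM : 2 * M^2 ≤ (n:ℝ) := hn0.trans (by exact_mod_cast (by omega : n0 ≤ n))
  have hnM2 : 2 * M^2 ≤ (n:ℝ)^2 := by nlinarith
  set l := (n:ℝ) * (n + c + d + 1) with hl
  have hl1 : (n:ℝ)^2 ≤ l := by rw [hl]; nlinarith
  have hl2 : l ≤ (1 + A) * (n:ℝ)^2 := by rw [hl, hA]; nlinarith
  have hl0 : 0 < l := by nlinarith
  have hode : JODE c d l (p n) := hp.jode hc' hd' n
  have hnorm : ipJ c d (p n) (p n) = 1 := by simpa using hp.2 n n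
  have hen := hp.energy hc' hd' n
  rw [← hl] at hen
  have hMl : M^2 ≤ l * (1/2) := by linarith
  have hn2 : 0 < (n:ℝ)^2 := by positivity
  have hM2 : 1 ≤ M^2 := by nlinarith
  set f := p n
  have mid : ∀ z, 0 ≤ z → z < 1 → M^2 / (n:ℝ)^2 ≤ 1 - z →
      (1 - z) ^ (c + 1/2) * eG l f z ≤ 12 * E * l := by
    intro z h0 h1 h2
    have hr : M^2 ≤ l * (1 - z) := by
      rw [div_le_iff₀ hn2] at h2
      nlinarith
    refine le_trans ?_ (mid_bound hc hd hl0 hM1 hMK hode hnorm hen hMl h0 h1 hr)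
    apply mul_le_mul_of_nonneg_right _ (eG_nonneg hl0 h0 h1.le f)
    unfold Jw
    have h5 : 0 < 1 - z := by linarith
    apply le_mul_of_one_le_right (by positivity)
    exact Real.one_le_rpow (by linarith) (by linarith)
  have fG : ∀ z, 0 ≤ z → z ≤ 1 → l * f.eval z ^ 2 ≤ eG l f z := by
    intro z h0 h1
    unfold eG
    have : 0 ≤ (1 - z^2) * (Polynomial.derivative f).eval z ^ 2 := by
      have : 0 ≤ 1 - z^2 := by nlinarith
      positivity
    linarith
  have hσ1 : 1 / ((n:ℝ) + 1) ≤ 1 / n := by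
    apply one_div_le_one_div_of_le hnpos; linarith
  have hσ0 : 0 ≤ 1 / ((n:ℝ) + 1) := by positivity
  have hsx : 0 ≤ √(1 - x) := Real.sqrt_nonneg _
  have h1x : 0 ≤ 1 - x := by linarith [hx.2]
  by_cases hcase : M^2 / (n:ℝ)^2 ≤ 1 - x
  · apply le_max_of_le_left
    have hx1 : 0 < 1 - x := lt_of_lt_of_le (by positivity) hcase
    have h1 := mid x hx.1 (by linarith) hcase
    have h2 : (√(1 - x) + 1 / ((n:ℝ) + 1)) ^ 2 ≤ 4 * (1 - x) := by
      have h3 : 1 / (n:ℝ) ≤ √(1 - x) := by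
        apply Real.le_sqrt_of_sq_le
        refine le_trans ?_ hcase
        rw [div_pow, one_pow]
        gcongr
      have h4 : √(1 - x) + 1 / ((n:ℝ) + 1) ≤ 2 * √(1 - x) := by linarith only [hσ1, h3]
      calc (√(1 - x) + 1 / ((n:ℝ) + 1)) ^ 2 ≤ (2 * √(1 - x)) ^ 2 := by gcongr
        _ = 4 * (1 - x) := by rw [mul_pow, Real.sq_sqrt h1x]; norm_num
    have h5 : f.eval x ^ 2 * (1 - x) ^ (c + 1/2) ≤ 12 * E := by
      have := fG x hx.1 hx.2
      have h6 : (1 - x) ^ (c + 1/2) * (l * f.eval x ^ 2) ≤ 12 * E * l :=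
        le_trans (by gcongr) h1
      have : l * (f.eval x ^ 2 * (1 - x) ^ (c + 1/2)) ≤ l * (12 * E) := by linarith
      exact le_of_mul_le_mul_left this hl0
    calc f.eval x ^ 2 * ((√(1 - x) + 1 / ((n:ℝ) + 1)) ^ 2) ^ (c + 1/2)
        ≤ f.eval x ^ 2 * (4 * (1 - x)) ^ (c + 1/2) := by gcongr
      _ = 4 ^ (c + 1/2) * (f.eval x ^ 2 * (1 - x) ^ (c + 1/2)) := by
          rw [Real.mul_rpow (by norm_num) h1x]; ring
      _ ≤ _ := by gcongr
  · apply le_max_of_le_right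
    push Not at hcase
    set x0 := 1 - M^2 / (n:ℝ)^2 with hx0
    set x1 := 1 - ε / (n:ℝ)^2 with hx1
    have hx00 : 0 ≤ x0 := by
      have : M^2 / (n:ℝ)^2 ≤ 1 := by rw [div_le_one hn2]; linarith
      linarith
    have hx0lt : x0 < 1 := by
      have : 0 < M^2 / (n:ℝ)^2 := by positivity
      linarith
    have hx1lt : x1 < 1 := by
      have : 0 < ε / (n:ℝ)^2 := by positivity
      linarith
    have hx01 : x0 ≤ x1 := by
      have : ε / (n:ℝ)^2 ≤ M^2 / (n:ℝ)^2 := by gcongr; linarith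
      linarith
    have b0 : eG l f x0 ≤ 12 * E * l * ((n:ℝ)^2) ^ (c + 1/2) := by
      have h1 := mid x0 hx00 hx0lt (by rw [hx0]; linarith)
      have e1 : 1 - x0 = M^2 / (n:ℝ)^2 := by rw [hx0]; ring
      rw [e1, Real.div_rpow (by positivity) (by positivity)] at h1
      have w : 0 < ((n:ℝ)^2) ^ (c + 1/2) := Real.rpow_pos_of_pos hn2 _
      have w2 : 1 ≤ (M^2) ^ (c + 1/2) := Real.one_le_rpow hM2 he0
      have g0 := eG_nonneg hl0 hx00 hx0lt.le f
      calc eG l f x0 ≤ (M^2) ^ (c + 1/2) * eG l f x0 := le_mul_of_one_le_left g0 w2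
        _ = ((M^2) ^ (c + 1/2) / ((n:ℝ)^2) ^ (c + 1/2) * eG l f x0) * ((n:ℝ)^2) ^ (c + 1/2) := by
            field_simp
        _ ≤ _ := by gcongr
    have b1 : ∀ z, x0 ≤ z → z ≤ x1 → f.eval z ^ 2 ≤ Q * ((n:ℝ)^2) ^ (c + 1/2) := by
      intro z hz0 hz1
      have t := trans_bound hl0 hode hx00 hz0 (by linarith)
      rw [← hK] at t
      have e1 : 1 - x0 = (M^2 / ε) * (ε / (n:ℝ)^2) := by rw [hx0]; field_simp; ring
      rw [e1, Real.mul_rpow (by positivity) (by positivity)] at t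
      have e2 : ε / (n:ℝ)^2 ≤ 1 - z := by linarith
      have w : 0 < (ε / (n:ℝ)^2) ^ (2 * K) := Real.rpow_pos_of_pos (by positivity) _
      have gz := eG_nonneg hl0 (hx00.trans hz0) (by linarith : z ≤ 1) f
      have t2 : eG l f z * (ε / (n:ℝ)^2) ^ (2 * K) ≤
          (eG l f x0 * (M^2 / ε) ^ (2 * K)) * (ε / (n:ℝ)^2) ^ (2 * K) := by
        refine le_trans ?_ (t.trans (le_of_eq (by ring)))
        gcongr
      have t3 := le_of_mul_le_mul_right t2 w
      have t4 := fG z (hx00.trans hz0) (by linarith)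
      have t5 : eG l f x0 * (M^2 / ε) ^ (2 * K) ≤
          12 * E * l * ((n:ℝ)^2) ^ (c + 1/2) * (M^2 / ε) ^ (2 * K) := by gcongr
      have t6 : l * f.eval z ^ 2 ≤ l * (Q * ((n:ℝ)^2) ^ (c + 1/2)) := by
        rw [hQ]; linarith
      exact le_of_mul_le_mul_left t6 hl0
    have hx0x : x0 ≤ x := by linarith
    have b2 : f.eval x ^ 2 ≤ 4 * Q * ((n:ℝ)^2) ^ (c + 1/2) := by
      have hQ0 : 0 ≤ Q * ((n:ℝ)^2) ^ (c + 1/2) := by positivity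
      rcases le_total x x1 with h | h
      · have := b1 x hx0x h
        linarith
      · have hs : l * 2 ^ |d| / (c + 1) * (1 - x1) ≤ 1/2 := by
          have e1 : 1 - x1 = ε / (n:ℝ)^2 := by rw [hx1]; ring
          rw [e1]
          have : (2:ℝ) ^ |d| > 0 := by positivity
          calc l * 2 ^ |d| / (c + 1) * (ε / (n:ℝ)^2)
              ≤ ((1 + A) * (n:ℝ)^2) * 2 ^ |d| / (c + 1) *
                (((c + 1) / (2 * 2 ^ |d| * (1 + A))) / (n:ℝ)^2) := by gcongr
            _ = 1/2 := by
              have : 1 + A ≠ 0 := by positivity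
              field_simp
        have := end_bound hc' hd' hl0 hode (hx00.trans hx01) hx1lt hs x ⟨h, hx.2⟩
        have h3 := b1 x1 hx01 le_rfl
        calc f.eval x ^ 2 = |f.eval x| ^ 2 := (sq_abs _).symm
          _ ≤ (2 * |f.eval x1|) ^ 2 := by gcongr
          _ = 4 * f.eval x1 ^ 2 := by rw [mul_pow, sq_abs]; norm_num
          _ ≤ _ := by linarith
    have h2 : (√(1 - x) + 1 / ((n:ℝ) + 1)) ^ 2 ≤ (M + 1)^2 / (n:ℝ)^2 := by
      rw [← div_pow]
      have : √(1 - x) ≤ M / n := by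
        rw [Real.sqrt_le_left (by positivity), div_pow]
        exact hcase.le
      have : √(1 - x) + 1 / ((n:ℝ) + 1) ≤ (M + 1) / n := by rw [add_div]; linarith
      gcongr
    have w : 0 < ((n:ℝ)^2) ^ (c + 1/2) := Real.rpow_pos_of_pos hn2 _
    calc f.eval x ^ 2 * ((√(1 - x) + 1 / ((n:ℝ) + 1)) ^ 2) ^ (c + 1/2)
        ≤ (4 * Q * ((n:ℝ)^2) ^ (c + 1/2)) * ((M + 1)^2 / (n:ℝ)^2) ^ (c + 1/2) := by gcongr
      _ = 4 * Q * ((M + 1) ^ 2) ^ (c + 1/2) := by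
        rw [Real.div_rpow (by positivity) (by positivity)]
        field_simp

lemma half_bound {c d : ℝ} (hc : -(1/2) ≤ c) (hd : -(1/2) ≤ d) {p : ℕ → Polynomial ℝ}
    (hp : ONPJ c d p) : ∃ C : ℝ, 0 < C ∧ ∀ n : ℕ, ∀ x ∈ Icc (0:ℝ) 1,
      |(p n).eval x| * (√(1 - x) + 1 / ((n:ℝ) + 1)) ^ (c + 1/2) ≤ C := by
  obtain ⟨C, n0, hC⟩ := big_n_bound hc hd
  have he0 : 0 ≤ c + 1/2 := by linarith
  have small : ∀ n, ∃ B : ℝ, ∀ x ∈ Icc (0:ℝ) 1, |(p n).eval x| ≤ B := by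
    intro n
    obtain ⟨B, hB⟩ := isCompact_Icc.exists_bound_of_continuousOn (s := Icc (0:ℝ) 1)
      (f := fun x => (p n).eval x) (p n).continuous.continuousOn
    exact ⟨B, fun x hx => by simpa using hB x hx⟩
  choose B hB using small
  have hB0 : ∀ n, 0 ≤ B n := fun n =>
    (abs_nonneg _).trans (hB n 0 ⟨le_rfl, zero_le_one⟩)
  refine ⟨√C + (∑ k ∈ Finset.range n0, B k) * 2 ^ (c + 1/2) + 1, ?_, ?_⟩
  · have := Finset.sum_nonneg (fun k (_ : k ∈ Finset.range n0) => hB0 k)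
    positivity
  intro n x hx
  have hs : 0 ≤ ∑ k ∈ Finset.range n0, B k := Finset.sum_nonneg (fun k _ => hB0 k)
  have hsig : 0 ≤ √(1 - x) + 1 / ((n:ℝ) + 1) := by positivity
  rcases le_or_gt n0 n with h | h
  · have h1 := hC p hp n h x hx
    have e : (p n).eval x ^ 2 * ((√(1 - x) + 1 / ((n:ℝ) + 1)) ^ 2) ^ (c + 1/2)
        = (|(p n).eval x| * (√(1 - x) + 1 / ((n:ℝ) + 1)) ^ (c + 1/2)) ^ 2 := by
      rw [mul_pow, sq_abs, ← Real.rpow_natCast _ 2, ← Real.rpow_natCast _ 2,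
        ← Real.rpow_natCast _ 2, ← Real.rpow_mul hsig, ← Real.rpow_mul hsig]
      ring_nf
    rw [e] at h1
    have := Real.le_sqrt_of_sq_le h1
    have h3 : 0 ≤ (∑ k ∈ Finset.range n0, B k) * 2 ^ (c + 1/2) := by positivity
    linarith
  · have h1 := hB n x hx
    have h2 : B n ≤ ∑ k ∈ Finset.range n0, B k :=
      Finset.single_le_sum (fun k _ => hB0 k) (Finset.mem_range.mpr h)
    have h3 : √(1 - x) + 1 / ((n:ℝ) + 1) ≤ 2 := by
      have : √(1 - x) ≤ 1 := by
        rw [Real.sqrt_le_left (by norm_num)]; linarith [hx.1]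
      have : 1 / ((n:ℝ) + 1) ≤ 1 := by
        rw [div_le_one (by positivity)]
        have : (0:ℝ) ≤ n := by positivity
        linarith
      linarith
    have : |(p n).eval x| * (√(1 - x) + 1 / ((n:ℝ) + 1)) ^ (c + 1/2)
        ≤ (∑ k ∈ Finset.range n0, B k) * 2 ^ (c + 1/2) := by
      gcongr
      exact h1.trans h2
    have := Real.sqrt_nonneg C
    linarith

/-- reflection -/
lemma ONPJ.reflect {c d : ℝ} {p : ℕ → Polynomial ℝ} (hp : ONPJ c d p) :
    ONPJ d c (fun n => (p n).comp (-Polynomial.X)) := by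
  constructor
  · intro n
    rw [Polynomial.natDegree_comp, hp.1]
    simp
  · intro n m
    rw [← hp.2 n m]
    unfold ipJ
    rw [integral_Icc_eq_integral_Ioc, integral_Icc_eq_integral_Ioc,
      ← intervalIntegral.integral_of_le (by norm_num),
      ← intervalIntegral.integral_of_le (by norm_num)]
    have := intervalIntegral.integral_comp_neg (a := -1) (b := 1)
      (fun x => (p n).eval x * (p m).eval x * Jw c d x)
    rw [neg_neg] at this
    rw [← this]
    congr 1; ext x
    simp [Jw, sub_eq_add_neg]
    left; ring

lemma full_bound {c d : ℝ} (hc : -(1/2) ≤ c) (hd : -(1/2) ≤ d) {p : ℕ → Polynomial ℝ}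
    (hp : ONPJ c d p) : ∃ C : ℝ, 0 < C ∧ ∀ n : ℕ, ∀ x ∈ Ioo (-1:ℝ) 1,
      |(p n).eval x| * (√(1 - x) ^ (c + 1/2) * √(1 + x) ^ (d + 1/2)) ≤ C := by
  obtain ⟨C1, hC1, h1⟩ := half_bound hc hd hp
  obtain ⟨C2, hC2, h2⟩ := half_bound hd hc hp.reflect
  have hc0 : 0 ≤ c + 1/2 := by linarith
  have hd0 : 0 ≤ d + 1/2 := by linarith
  refine ⟨C1 * 2 ^ (d + 1/2) + C2 * 2 ^ (c + 1/2), by positivity, ?_⟩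
  intro n x hx
  have s2 : ∀ z : ℝ, z ≤ 4 → √z ≤ 2 := by
    intro z hz
    rw [Real.sqrt_le_left (by norm_num)]; linarith
  have b1 := s2 (1 - x) (by linarith [hx.1])
  have b2 := s2 (1 + x) (by linarith [hx.2])
  have k0 : 0 ≤ 1 / ((n:ℝ) + 1) := by positivity
  rcases le_total 0 x with h | h
  · have h3 := h1 n x ⟨h, hx.2.le⟩
    have : |(p n).eval x| * (√(1 - x) ^ (c + 1/2) * √(1 + x) ^ (d + 1/2)) ≤ C1 * 2 ^ (d + 1/2) := by
      calc |(p n).eval x| * (√(1 - x) ^ (c + 1/2) * √(1 + x) ^ (d + 1/2))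
          ≤ |(p n).eval x| * ((√(1 - x) + 1 / ((n:ℝ) + 1)) ^ (c + 1/2) * 2 ^ (d + 1/2)) := by
            gcongr; linarith
        _ = (|(p n).eval x| * ((√(1 - x) + 1 / ((n:ℝ) + 1)) ^ (c + 1/2))) * 2 ^ (d + 1/2) := by ring
        _ ≤ _ := by gcongr
    have : 0 ≤ C2 * 2 ^ (c + 1/2) := by positivity
    linarith
  · have h3 := h2 n (-x) ⟨by linarith, by linarith [hx.1]⟩
    simp only [Polynomial.eval_comp, Polynomial.eval_neg, Polynomial.eval_X, neg_neg,
      sub_neg_eq_add] at h3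
    have : |(p n).eval x| * (√(1 - x) ^ (c + 1/2) * √(1 + x) ^ (d + 1/2)) ≤ C2 * 2 ^ (c + 1/2) := by
      calc |(p n).eval x| * (√(1 - x) ^ (c + 1/2) * √(1 + x) ^ (d + 1/2))
          ≤ |(p n).eval x| * (2 ^ (c + 1/2) * (√(1 + x) + 1 / ((n:ℝ) + 1)) ^ (d + 1/2)) := by
            gcongr; linarith
        _ = (|(p n).eval x| * ((√(1 + x) + 1 / ((n:ℝ) + 1)) ^ (d + 1/2))) * 2 ^ (c + 1/2) := by ring
        _ ≤ _ := by gcongr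
    have : 0 ≤ C1 * 2 ^ (d + 1/2) := by positivity
    linarith


/-- kernel polynomial with `n` terms -/
def kerP (p : ℕ → Polynomial ℝ) (n : ℕ) (y : ℝ) : Polynomial ℝ :=
  ∑ k ∈ Finset.range n, (p k).eval y • p k

lemma kerP_succ (p : ℕ → Polynomial ℝ) (n : ℕ) (y : ℝ) :
    kerP p (n + 1) y = kerP p n y + (p n).eval y • p n := Finset.sum_range_succ _ _

lemma kerP_eval (p : ℕ → Polynomial ℝ) (n : ℕ) (x y : ℝ) :
    (kerP p (n + 1) y).eval x = CDK p n x y := by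
  unfold kerP CDK
  rw [Polynomial.eval_finsetSum]
  apply Finset.sum_congr rfl
  intro k _
  simp [mul_comm]

lemma CDK_symm (p : ℕ → Polynomial ℝ) (n : ℕ) (x y : ℝ) : CDK p n x y = CDK p n y x := by
  unfold CDK; apply Finset.sum_congr rfl; intro k _; ring

lemma kerP_degree {c d : ℝ} {p : ℕ → Polynomial ℝ} (hp : ONPJ c d p) (n : ℕ) (y : ℝ) :
    (kerP p (n + 1) y).natDegree ≤ n := by
  unfold kerP
  apply Polynomial.natDegree_sum_le_of_forall_le
  intro k hk
  refine (Polynomial.natDegree_smul_le _ _).trans ?_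
  rw [hp.1]
  have := Finset.mem_range.mp hk; omega

lemma kerP_mul_degree {c d : ℝ} {p : ℕ → Polynomial ℝ} (hp : ONPJ c d p) (n : ℕ) (y : ℝ)
    (g : Polynomial ℝ) (hg : g.natDegree ≤ 1) : (g * kerP p n y).natDegree ≤ n := by
  cases n with
  | zero => simp [kerP]
  | succ n =>
    refine Polynomial.natDegree_mul_le.trans ?_
    have := kerP_degree hp n y
    omega

lemma kerP_repr {c d : ℝ} (hc : -1 < c) (hd : -1 < d) {p : ℕ → Polynomial ℝ} (hp : ONPJ c d p)
    {n : ℕ} {f : Polynomial ℝ} (hf : f.natDegree ≤ n) (y : ℝ) :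
    ipJ c d f (kerP p (n + 1) y) = f.eval y := by
  rw [ipJ_comm, kerP, ipJ_sum hc hd]
  conv_rhs => rw [hp.expand hc hd hf]
  rw [Polynomial.eval_finsetSum]
  apply Finset.sum_congr rfl
  intro k _
  rw [ipJ_smul, ipJ_comm]
  simp [mul_comm]

lemma ipJ_succ {c d : ℝ} (hc : -1 < c) (f g : Polynomial ℝ) :
    ipJ (c + 1) d f g = ipJ c d ((1 - Polynomial.X) * f) g := by
  unfold ipJ
  apply setIntegral_congr_fun measurableSet_Icc
  intro x hx
  have h : 0 ≤ 1 - x := by linarith [hx.2]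
  simp only [Jw, Polynomial.eval_mul, Polynomial.eval_sub, Polynomial.eval_one, Polynomial.eval_X]
  rw [Real.rpow_add_one' h (by linarith)]
  ring

lemma ipJ_self_nonneg (c d : ℝ) (f : Polynomial ℝ) : 0 ≤ ipJ c d f f := by
  unfold ipJ
  apply setIntegral_nonneg measurableSet_Icc
  intro x hx
  exact mul_nonneg (mul_self_nonneg _) (Jw_nonneg hx)

lemma ipJ_self_pos {c d : ℝ} (hc : -1 < c) (hd : -1 < d) {f : Polynomial ℝ} (hf : f ≠ 0) :
    0 < ipJ c d f f := by
  unfold ipJ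
  rw [setIntegral_pos_iff_support_of_nonneg_ae]
  · have hsub : Ioo (-1:ℝ) 1 \ (f.roots.toFinset : Set ℝ) ⊆
        (Function.support fun x => f.eval x * f.eval x * Jw c d x) ∩ Icc (-1) 1 := by
      rintro x ⟨hx, hr⟩
      refine ⟨?_, hx.1.le, hx.2.le⟩
      have h0 : f.eval x ≠ 0 := by
        intro h; apply hr; simp [hf, h]
      have h1 : 0 < 1 - x := by linarith [hx.2]
      have h2 : 0 < 1 + x := by linarith [hx.1]
      have : 0 < Jw c d x := by unfold Jw; positivity
      simp only [Function.mem_support]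
      positivity
    refine lt_of_lt_of_le ?_ (measure_mono hsub)
    rw [measure_sdiff_null ((Finset.finite_toSet _).measure_zero _)]
    simp
  · filter_upwards [ae_restrict_mem measurableSet_Icc] with x hx
    exact mul_nonneg (mul_self_nonneg _) (Jw_nonneg hx)
  · exact ipJ_integrableOn hc hd f f

lemma kap_norm {c d : ℝ} (hc : -1 < c) (hd : -1 < d) {p : ℕ → Polynomial ℝ} (hp : ONPJ c d p)
    (n : ℕ) : 0 < ipJ (c+1) d (kerP p (n+1) 1) (kerP p (n+1) 1) ∧ (p n).eval 1 ≠ 0 ∧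
      ipJ (c+1) d (kerP p (n+1) 1) (kerP p (n+1) 1) ≤ 2 * (p n).eval 1 ^ 2 := by
  have hc1 : -1 < c + 1 := by linarith
  set κ := kerP p (n+1) 1 with hκ
  set t := (p n).eval 1 with ht
  have hdeg : (1 - Polynomial.X : Polynomial ℝ).natDegree ≤ 1 := by
    refine (Polynomial.natDegree_sub_le _ _).trans ?_
    simp
  have h0 : κ ≠ 0 := by
    intro h
    have := kerP_repr hc hd hp (n := n) (f := 1) (by simp) 1
    rw [← hκ, h] at this
    simp [ipJ] at this
  have hN := ipJ_self_pos hc1 hd h0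
  have e1 : ipJ (c+1) d (kerP p n 1) κ = 0 := by
    rw [ipJ_succ hc, hκ, kerP_repr hc hd hp (kerP_mul_degree hp n 1 _ hdeg)]
    simp
  have e2 : ipJ (c+1) d κ κ = t * ipJ (c+1) d (p n) κ := by
    have e3 : κ = kerP p n 1 + t • p n := kerP_succ p n 1
    have e4 : ipJ (c+1) d κ κ = ipJ (c+1) d (kerP p n 1 + t • p n) κ := by rw [← e3]
    rw [e4, ipJ_add hc1 hd, ipJ_smul, e1, zero_add]
  refine ⟨hN, ?_, ?_⟩
  · intro h
    rw [e2, h, zero_mul] at hN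
    exact lt_irrefl _ hN
  · have h3 := ipJ_self_nonneg (c+1) d (t • p n - κ)
    rw [ipJ_sub hc1 hd, ipJ_smul, ipJ_comm _ _ (p n), ipJ_comm _ _ κ, ipJ_sub hc1 hd,
      ipJ_sub hc1 hd, ipJ_smul, ipJ_smul, ipJ_comm _ _ κ (p n)] at h3
    have h4 : ipJ (c+1) d (p n) (p n) ≤ 2 := by
      have h5 : 0 ≤ ipJ c d ((1 + Polynomial.X) * p n) (p n) := by
        unfold ipJ
        apply setIntegral_nonneg measurableSet_Icc
        intro x hx
        have : 0 ≤ 1 + x := by linarith [hx.1]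
        have := mul_nonneg (mul_nonneg this (mul_self_nonneg ((p n).eval x))) (Jw_nonneg (c := c) (d := d) hx)
        simp only [Polynomial.eval_mul, Polynomial.eval_add, Polynomial.eval_one, Polynomial.eval_X]
        linarith
      have h6 : ipJ (c+1) d (p n) (p n) + ipJ c d ((1 + Polynomial.X) * p n) (p n) = 2 := by
        rw [ipJ_succ hc, ← ipJ_add hc hd]
        have : (1 - Polynomial.X) * p n + (1 + Polynomial.X) * p n = (2:ℝ) • p n := by
          rw [two_smul]; ring
        rw [this, ipJ_smul, hp.2]; simp
      linarith
    nlinarith [sq_nonneg t]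

lemma kap_onpj {c d : ℝ} (hc : -1 < c) (hd : -1 < d) {p : ℕ → Polynomial ℝ} (hp : ONPJ c d p) :
    ONPJ (c+1) d (fun n => (1 / √(ipJ (c+1) d (kerP p (n+1) 1) (kerP p (n+1) 1))) • kerP p (n+1) 1) := by
  have hdeg : (1 - Polynomial.X : Polynomial ℝ).natDegree ≤ 1 := by
    refine (Polynomial.natDegree_sub_le _ _).trans ?_
    simp
  constructor
  · intro n
    obtain ⟨h1, h2, _⟩ := kap_norm hc hd hp n
    rw [Polynomial.natDegree_smul _ (by positivity)]
    cases n with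
    | zero =>
      have := kerP_degree hp 0 1
      omega
    | succ n =>
      rw [kerP_succ, Polynomial.natDegree_add_eq_right_of_natDegree_lt]
      · rw [Polynomial.natDegree_smul _ h2, hp.1]
      · rw [Polynomial.natDegree_smul _ h2, hp.1]
        have := kerP_degree hp n 1
        omega
  · have lt : ∀ n m, n < m → ipJ (c+1) d (kerP p (n+1) 1) (kerP p (m+1) 1) = 0 := by
      intro n m h
      rw [ipJ_succ hc, kerP_repr hc hd hp]
      · simp
      · exact (kerP_mul_degree hp (n+1) 1 _ hdeg).trans h
    intro n m
    rw [ipJ_smul, ipJ_smul_right]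
    rcases lt_trichotomy n m with h | h | h
    · rw [lt n m h, if_neg (by omega)]; simp
    · subst h
      obtain ⟨h1, _⟩ := kap_norm hc hd hp n
      rw [if_pos rfl]
      set N := ipJ (c+1) d (kerP p (n+1) 1) (kerP p (n+1) 1)
      have h2 : √N * √N = N := Real.mul_self_sqrt h1.le
      have h3 : 0 < √N := Real.sqrt_pos.mpr h1
      field_simp
      linarith
    · rw [ipJ_comm _ _ (kerP p (n+1) 1) (kerP p (m+1) 1), lt m n h, if_neg (by omega)]; simp

lemma cd_identity {c d : ℝ} (hc : -1 < c) (hd : -1 < d) {p : ℕ → Polynomial ℝ} (hp : ONPJ c d p)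
    (n : ℕ) (x y : ℝ) :
    (p n).eval 1 * ((x - y) * CDK p n x y) =
      (p n).eval x * ((1 - y) * (kerP p (n+1) 1).eval y)
      - (p n).eval y * ((1 - x) * (kerP p (n+1) 1).eval x) := by
  obtain ⟨_, ht, _⟩ := kap_norm hc hd hp n
  set t := (p n).eval 1
  set u := (p n).eval y
  set v := (1 - y) * (kerP p (n+1) 1).eval y with hv
  set R : Polynomial ℝ := t • ((Polynomial.X - Polynomial.C y) * kerP p (n+1) y) - v • p n
    + u • ((1 - Polynomial.X) * kerP p (n+1) 1) with hR
  have hdeg : (1 - Polynomial.X : Polynomial ℝ).natDegree ≤ 1 := by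
    refine (Polynomial.natDegree_sub_le _ _).trans ?_
    simp
  have hdeg2 : (Polynomial.X - Polynomial.C y : Polynomial ℝ).natDegree ≤ 1 := by simp
  have hR2 : R = t • ((Polynomial.X - Polynomial.C y) * kerP p n y) + (t * u * (1 - y) - v) • p n
      + u • ((1 - Polynomial.X) * kerP p n 1) := by
    rw [hR, kerP_succ, kerP_succ]
    simp only [Polynomial.smul_eq_C_mul, Polynomial.C_mul, Polynomial.C_sub, Polynomial.C_1]
    ring
  have hRd : R.natDegree ≤ n := by
    rw [hR2]
    refine Polynomial.natDegree_add_le_of_degree_le (Polynomial.natDegree_add_le_of_degree_le ?_ ?_) ?_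
    · exact (Polynomial.natDegree_smul_le _ _).trans (kerP_mul_degree hp n y _ hdeg2)
    · exact (Polynomial.natDegree_smul_le _ _).trans (hp.1 n).le
    · exact (Polynomial.natDegree_smul_le _ _).trans (kerP_mul_degree hp n 1 _ hdeg)
  have hz : ∀ k ∈ Finset.range n, ipJ c d R (p k) • p k = 0 := by
    intro k hk
    have hk' := Finset.mem_range.mp hk
    have a1 : ∀ (g : Polynomial ℝ) (z : ℝ), g.natDegree ≤ 1 → g.eval z = 0 →
        ipJ c d (g * kerP p (n+1) z) (p k) = 0 := by
      intro g z hg hz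
      have e : ipJ c d (g * kerP p (n+1) z) (p k) = ipJ c d (g * p k) (kerP p (n+1) z) := by
        rw [mul_comm g, ipJ_mul_left, ipJ_comm]
      rw [e, kerP_repr hc hd hp]
      · simp [hz]
      · refine Polynomial.natDegree_mul_le.trans ?_
        rw [hp.1]; omega
    rw [hR, ipJ_add hc hd, ipJ_sub hc hd, ipJ_smul, ipJ_smul, ipJ_smul, a1 _ _ hdeg2 (by simp),
      a1 _ _ hdeg (by simp), hp.2, if_neg (by omega)]
    simp
  have hex := hp.expand hc hd hRd
  rw [Finset.sum_range_succ, Finset.sum_eq_zero hz, zero_add] at hex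
  have ev : ∀ z, R.eval z = t * ((z - y) * CDK p n z y) - v * (p n).eval z
      + u * ((1 - z) * (kerP p (n+1) 1).eval z) := by
    intro z
    rw [hR]
    simp [kerP_eval]
  have h1 : R.eval 1 = 0 := by
    rw [ev, hv, kerP_eval, CDK_symm p n y 1]; ring
  rw [hex] at h1
  have h2 : ipJ c d R (p n) = 0 := by
    simp only [Polynomial.eval_smul, smul_eq_mul, mul_eq_zero] at h1
    exact h1.resolve_right ht
  rw [h2, zero_smul] at hex
  have := ev x
  rw [hex] at this
  simp only [Polynomial.eval_zero] at this
  linarith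

lemma cd_bound {c d : ℝ} (hc : -1 < c) (hd : -1 < d) {p : ℕ → Polynomial ℝ} (hp : ONPJ c d p) :
    ∃ q : ℕ → Polynomial ℝ, ONPJ (c+1) d q ∧ ∀ n : ℕ, ∀ x ∈ Icc (-1:ℝ) 1, ∀ y ∈ Icc (-1:ℝ) 1,
      |CDK p n x y| * |x - y| ≤ 2 * (|(p n).eval x| * ((1 - y) * |(q n).eval y|)
        + |(p n).eval y| * ((1 - x) * |(q n).eval x|)) := by
  refine ⟨_, kap_onpj hc hd hp, ?_⟩
  intro n x hx y hy
  obtain ⟨h1, ht, h2⟩ := kap_norm hc hd hp n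
  have id := cd_identity hc hd hp n x y
  set t := (p n).eval 1
  set κ := kerP p (n+1) 1
  set N := ipJ (c+1) d κ κ
  have hN : 0 < √N := Real.sqrt_pos.mpr h1
  have hNt : √N ≤ 2 * |t| := by
    rw [Real.sqrt_le_left (by positivity), mul_pow, sq_abs]
    nlinarith [sq_nonneg t]
  have e : ∀ z, κ.eval z = √N * ((1 / √N) • κ).eval z := by
    intro z
    simp
    field_simp
  have h1x : 0 ≤ 1 - x := by linarith [hx.2]
  have h1y : 0 ≤ 1 - y := by linarith [hy.2]
  have ht' : 0 < |t| := abs_pos.mpr ht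
  set g := (1 / √N) • κ
  rw [e, e] at id
  have h3 : |t| * (|CDK p n x y| * |x - y|) ≤ √N * (|(p n).eval x| * ((1 - y) * |g.eval y|)
        + |(p n).eval y| * ((1 - x) * |g.eval x|)) := by
    have : |t| * (|CDK p n x y| * |x - y|) = |t * ((x - y) * CDK p n x y)| := by
      rw [abs_mul, abs_mul]; ring
    rw [this, id]
    refine (abs_sub _ _).trans (le_of_eq ?_)
    simp only [abs_mul, abs_of_nonneg h1x, abs_of_nonneg h1y, abs_of_pos hN]
    ring
  have h4 : |t| * (|CDK p n x y| * |x - y|) ≤ |t| * (2 * (|(p n).eval x| * ((1 - y) * |g.eval y|)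
        + |(p n).eval y| * ((1 - x) * |g.eval x|))) := by
    refine h3.trans ?_
    have h5 : 0 ≤ |(p n).eval x| * ((1 - y) * |g.eval y|)
        + |(p n).eval y| * ((1 - x) * |g.eval x|) := by positivity
    have := mul_le_mul_of_nonneg_right hNt h5
    linarith
  exact le_of_mul_le_mul_left h4 ht'


lemma wt_alg (i j α β : ℝ) {t r : ℝ} (ht : 0 < t) (hr : 0 < r) (h : 2 - t^2 = r^2) :
    Jw (i/2) (j/2) (1 - t^2) * Jw α β (1 - t^2) * t =
      t ^ (i + α + 1/2) * r ^ (j + β + 1/2) * (t ^ (α + 1/2) * r ^ (β - 1/2)) := by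
  have e1 : 1 - (1 - t^2) = t^2 := by ring
  have e2 : 1 + (1 - t^2) = r^2 := by rw [← h]; ring
  unfold Jw
  rw [e1, e2]
  have p2 : ∀ (z e : ℝ), 0 < z → (z^2) ^ e = z ^ (2 * e) := by
    intro z e hz
    rw [Real.rpow_mul hz.le]; norm_num
  rw [p2 t _ ht, p2 t _ ht, p2 r _ hr, p2 r _ hr]
  have t1 : t ^ (2 * (i/2)) * t ^ (2 * α) * t = t ^ (i + α + 1/2) * t ^ (α + 1/2) := by
    rw [← Real.rpow_add ht, ← Real.rpow_add_one ht.ne', ← Real.rpow_add ht]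
    congr 1; ring
  have r1 : r ^ (2 * (j/2)) * r ^ (2 * β) = r ^ (j + β + 1/2) * r ^ (β - 1/2) := by
    rw [← Real.rpow_add hr, ← Real.rpow_add hr]
    congr 1; ring
  calc _ = (t ^ (2 * (i/2)) * t ^ (2 * α) * t) * (r ^ (2 * (j/2)) * r ^ (2 * β)) := by ring
    _ = _ := by rw [t1, r1]; ring

lemma Jx_bound {i j x h : ℝ} (hi : 0 ≤ i) (hj : 0 ≤ j) (hx : x ∈ Icc (0:ℝ) 1) (hh : 0 ≤ h) :
    Jw (i/2) (j/2) x ≤ (√(1 - x) + h) ^ i * 2 ^ (j/2) := by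
  have h1 : 0 ≤ 1 - x := by linarith [hx.2]
  unfold Jw
  have e : (1 - x) ^ (i/2) = √(1 - x) ^ i := by
    rw [Real.sqrt_eq_rpow, ← Real.rpow_mul h1]; congr 1; ring
  rw [e]
  have : 0 ≤ 1 + x := by linarith [hx.1]
  gcongr
  · linarith
  · linarith [hx.2]

lemma Jx_mul_bound {i j x h P C e : ℝ} (hi : 0 ≤ i) (hj : 0 ≤ j) (hx : x ∈ Icc (0:ℝ) 1)
    (hh : 0 < h) (hP : 0 ≤ P) (hb : P * (√(1 - x) + h) ^ (i + e) ≤ C) :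
    Jw (i/2) (j/2) x * P ≤ 2 ^ (j/2) * C * (√(1 - x) + h) ^ (-e) := by
  have hs : 0 < √(1 - x) + h := by positivity
  have h1 := Jx_bound hi hj hx hh.le
  set σ := √(1 - x) + h
  calc Jw (i/2) (j/2) x * P ≤ σ ^ i * 2 ^ (j/2) * P := by gcongr
    _ = 2 ^ (j/2) * (P * σ ^ (i + e)) * σ ^ (-e) := by
      have : σ ^ i = σ ^ (i + e) * σ ^ (-e) := by
        rw [← Real.rpow_add hs]; congr 1; ring
      rw [this]; ring
    _ ≤ _ := by gcongr

lemma G_bound {i j α β : ℝ} (hα : -(1/2) ≤ α) (hβ : -(1/2) ≤ β) (hi : 0 ≤ i) (hj : 0 ≤ j)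
    {p : ℕ → Polynomial ℝ} (hp : ONPJ (i + α) (j + β) p) :
    ∃ C : ℝ, 0 < C ∧ ∀ n : ℕ, ∀ x ∈ Icc (0:ℝ) 1, ∀ t ∈ Ioo (0:ℝ) (√2),
      (1 / ((n:ℝ) + 1) + |t - √(1 - x)|) *
        (Jw (i/2) (j/2) x * |CDK p n x (1 - t^2)| * (Jw (i/2) (j/2) (1 - t^2) * Jw α β (1 - t^2) * t))
      ≤ C * ((√(1 - x) + 1 / ((n:ℝ) + 1)) ^ (-(α + 1/2)) * (t ^ (α + 1/2) * √(2 - t^2) ^ (β - 1/2))) := by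
  have ha : -(1/2) ≤ i + α := by linarith
  have hb : -(1/2) ≤ j + β := by linarith
  obtain ⟨q, hq, hcd⟩ := cd_bound (by linarith : -1 < i + α) (by linarith : -1 < j + β) hp
  obtain ⟨A1, hA1, hpx⟩ := half_bound ha hb hp
  obtain ⟨A2, hA2, hqx⟩ := half_bound (by linarith) hb hq
  obtain ⟨B1, hB1, hpy⟩ := full_bound ha hb hp
  obtain ⟨B2, hB2, hqy⟩ := full_bound (by linarith) hb hq
  have hJ0 : (0:ℝ) < 2 ^ (j/2) := by positivity
  refine ⟨2 ^ (j/2) * A1 * B1 + 2 * (2 ^ (j/2) * A1 * B2 + 2 ^ (j/2) * A2 * B1), by positivity, ?_⟩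
  intro n x hx t ht
  have ht0 := ht.1
  have ht2 : t^2 < 2 := by
    have := ht.2
    have h2 := Real.sq_sqrt (show (0:ℝ) ≤ 2 by norm_num)
    nlinarith [Real.sqrt_nonneg 2]
  set r := √(2 - t^2) with hr
  have hr0 : 0 < r := Real.sqrt_pos.mpr (by linarith)
  have hr2 : 2 - t^2 = r^2 := (Real.sq_sqrt (by linarith)).symm
  rw [wt_alg i j α β ht0 hr0 hr2]
  set y := 1 - t^2 with hy
  have hyI : y ∈ Ioo (-1:ℝ) 1 := ⟨by linarith, by nlinarith⟩
  have hyI' : y ∈ Icc (-1:ℝ) 1 := ⟨hyI.1.le, hyI.2.le⟩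
  have hxI : x ∈ Icc (-1:ℝ) 1 := ⟨by linarith [hx.1], hx.2⟩
  have sy1 : √(1 - y) = t := by
    rw [hy, show 1 - (1 - t^2) = t^2 by ring, Real.sqrt_sq ht0.le]
  have sy2 : √(1 + y) = r := by
    rw [hr, hy]; congr 1; ring
  have hs0 : 0 ≤ √(1 - x) := Real.sqrt_nonneg _
  have hss : √(1 - x)^2 = 1 - x := Real.sq_sqrt (by linarith [hx.2])
  set s := √(1 - x) with hs
  set h := 1 / ((n:ℝ) + 1) with hh
  have hh0 : 0 < h := by positivity
  set σ := s + h with hσ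
  have hσ0 : 0 < σ := by positivity
  set U := t ^ (i + α + 1/2) * r ^ (j + β + 1/2) with hU
  set V := t ^ (α + 1/2) * r ^ (β - 1/2) with hV
  have hU0 : 0 < U := by positivity
  have hV0 : 0 < V := by positivity
  have hJx : 0 ≤ Jw (i/2) (j/2) x := Jw_nonneg hxI
  have hp1 := fun m => hpy m y hyI
  rw [sy1, sy2, ← hU] at hp1
  have hq1 := hqy n y hyI
  rw [sy1, sy2] at hq1
  have hq1' : |(q n).eval y| * (t * U) ≤ B2 := by
    refine le_trans (le_of_eq ?_) hq1
    rw [hU]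
    have : t ^ (i + α + 1 + 1/2) = t * t ^ (i + α + 1/2) := by
      rw [mul_comm, ← Real.rpow_add_one ht0.ne']; congr 1; ring
    rw [this]; ring
  have hpx' : ∀ m, m ≤ n → Jw (i/2) (j/2) x * |(p m).eval x| ≤ 2 ^ (j/2) * A1 * σ ^ (-(α + 1/2)) := by
    intro m hm
    have h1 := hpx m x hx
    have h2 : Jw (i/2) (j/2) x * |(p m).eval x| ≤
        2 ^ (j/2) * A1 * (√(1 - x) + 1 / ((m:ℝ) + 1)) ^ (-(α + 1/2)) := by
      apply Jx_mul_bound hi hj hx (by positivity) (abs_nonneg _)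
      rwa [← add_assoc]
    refine h2.trans ?_
    apply mul_le_mul_of_nonneg_left _ (by positivity)
    apply Real.rpow_le_rpow_of_nonpos hσ0 _ (by linarith)
    rw [hσ, hh, ← hs]
    have : (m:ℝ) ≤ n := by exact_mod_cast hm
    gcongr
  have hqx' : Jw (i/2) (j/2) x * (s^2 * |(q n).eval x|) ≤ 2 ^ (j/2) * A2 * σ ^ (-(α + 1/2)) * s := by
    have h1 := hqx n x hx
    have h2 : Jw (i/2) (j/2) x * |(q n).eval x| ≤
        2 ^ (j/2) * A2 * (√(1 - x) + h) ^ (-(α + 1/2 + 1)) := by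
      apply Jx_mul_bound hi hj hx (by positivity) (abs_nonneg _)
      rw [← hs]
      refine le_trans (le_of_eq ?_) h1
      congr 2; ring
    rw [← hs, ← hσ] at h2
    have e3 : σ ^ (-(α + 1/2)) = σ ^ (-(α + 1/2 + 1)) * σ := by
      rw [← Real.rpow_add_one hσ0.ne']; congr 1; ring
    have h4 : s ≤ σ := by rw [hσ]; linarith
    calc Jw (i/2) (j/2) x * (s^2 * |(q n).eval x|)
        = (Jw (i/2) (j/2) x * |(q n).eval x|) * s * s := by ring
      _ ≤ (2 ^ (j/2) * A2 * σ ^ (-(α + 1/2 + 1))) * σ * s := by gcongr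
      _ = _ := by rw [e3]; ring
  set Sg := σ ^ (-(α + 1/2)) with hSg
  have hSg0 : 0 < Sg := by positivity
  set K := |CDK p n x y| with hK
  have hK0 : 0 ≤ K := abs_nonneg _
  have diag : h * (Jw (i/2) (j/2) x * K * U) ≤ 2 ^ (j/2) * A1 * B1 * Sg := by
    have h1 : Jw (i/2) (j/2) x * K * U ≤ ((n:ℝ) + 1) * (2 ^ (j/2) * A1 * B1 * Sg) := by
      calc Jw (i/2) (j/2) x * K * U
          ≤ Jw (i/2) (j/2) x * (∑ m ∈ Finset.range (n+1), |(p m).eval x| * |(p m).eval y|) * U := by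
            have : K ≤ ∑ m ∈ Finset.range (n+1), |(p m).eval x| * |(p m).eval y| := by
              refine (Finset.abs_sum_le_sum_abs _ _).trans (le_of_eq ?_)
              simp only [abs_mul]
            gcongr
        _ = ∑ m ∈ Finset.range (n+1), (Jw (i/2) (j/2) x * |(p m).eval x|) * (|(p m).eval y| * U) := by
            rw [Finset.mul_sum, Finset.sum_mul]
            apply Finset.sum_congr rfl; intro m _; ring
        _ ≤ ∑ m ∈ Finset.range (n+1), (2 ^ (j/2) * A1 * Sg) * B1 := by
            apply Finset.sum_le_sum
            intro m hm
            have := hpx' m (by have := Finset.mem_range.mp hm; omega)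
            have := hp1 m
            gcongr
        _ = _ := by rw [Finset.sum_const, Finset.card_range]; push_cast [nsmul_eq_mul]; ring
    calc h * (Jw (i/2) (j/2) x * K * U) ≤ h * (((n:ℝ) + 1) * (2 ^ (j/2) * A1 * B1 * Sg)) := by gcongr
      _ = _ := by rw [hh]; field_simp
  have off : |t - s| * (Jw (i/2) (j/2) x * K * U) ≤
      2 * (2 ^ (j/2) * A1 * B2 + 2 ^ (j/2) * A2 * B1) * Sg := by
    have h1 := hcd n x hxI y hyI'
    have e1 : |x - y| = |t - s| * (t + s) := by
      have : x - y = (t - s) * (t + s) := by rw [hy]; linear_combination hss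
      rw [this, abs_mul, abs_of_pos (by linarith : 0 < t + s)]
    have e2 : 1 - y = t^2 := by rw [hy]; ring
    rw [e1, e2, ← hss] at h1
    have hts : 0 < t + s := by linarith
    have h2 : (t + s) * (|t - s| * (Jw (i/2) (j/2) x * K * U)) ≤
        (t + s) * (2 * (2 ^ (j/2) * A1 * B2 + 2 ^ (j/2) * A2 * B1) * Sg) := by
      calc (t + s) * (|t - s| * (Jw (i/2) (j/2) x * K * U))
          = (K * (|t - s| * (t + s))) * (Jw (i/2) (j/2) x * U) := by ring
        _ ≤ (2 * (|(p n).eval x| * (t^2 * |(q n).eval y|)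
        + |(p n).eval y| * (s^2 * |(q n).eval x|))) * (Jw (i/2) (j/2) x * U) := by gcongr
        _ = 2 * ((Jw (i/2) (j/2) x * |(p n).eval x|) * t * (|(q n).eval y| * (t * U))
            + (|(p n).eval y| * U) * (Jw (i/2) (j/2) x * (s^2 * |(q n).eval x|))) := by ring
        _ ≤ 2 * ((2 ^ (j/2) * A1 * Sg) * t * B2 + B1 * (2 ^ (j/2) * A2 * Sg * s)) := by
            have := hpx' n le_rfl
            have := hp1 n
            gcongr
        _ ≤ _ := by
            have g1 : 0 ≤ 2 ^ (j/2) * A1 * Sg * s * B2 := by positivity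
            have g2 : 0 ≤ B1 * (2 ^ (j/2) * A2 * Sg * t) := by positivity
            nlinarith
    exact le_of_mul_le_mul_left h2 hts
  calc (h + |t - s|) * (Jw (i/2) (j/2) x * K * (U * V))
      = (h * (Jw (i/2) (j/2) x * K * U) + |t - s| * (Jw (i/2) (j/2) x * K * U)) * V := by ring
    _ ≤ (2 ^ (j/2) * A1 * B1 * Sg + 2 * (2 ^ (j/2) * A1 * B2 + 2 ^ (j/2) * A2 * B1) * Sg) * V := by
      gcongr
    _ = _ := by ring


set_option maxHeartbeats 2000000 in
lemma maj_pt {δ β C h s t G : ℝ} (hδ : 0 ≤ δ) (hβ : -(1/2) ≤ β) (hC : 0 < C) (hh : 0 < h) (hh1 : h ≤ 1)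
    (hs0 : 0 ≤ s) (hs1 : s ≤ 1) (ht : t ∈ Ioo (0:ℝ) (√2))
    (hb : (h + |t - s|) * G ≤ C * ((s + h) ^ (-δ) * (t ^ δ * √(2 - t^2) ^ (β - 1/2)))) :
    G ≤ (C * (2 ^ δ * 2 ^ (β + 1/2)) * (2 + 5 * (1 + 3 ^ δ))) *
      ((h + |t - s|) ^ (-1:ℝ) + h ^ (-δ) * (h + |t - s|) ^ (δ - 1) + h ^ (-δ) * (√2 - t) ^ (-(1/2):ℝ)) := by
  have ht0 := ht.1
  have hq2 := Real.sq_sqrt (show (0:ℝ) ≤ 2 by norm_num)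
  have hq0 : 1 ≤ √2 := by rw [Real.one_le_sqrt]; norm_num
  have hq1 : √2 ≤ 3/2 := by rw [Real.sqrt_le_left (by norm_num)]; norm_num
  have hd0 : 0 < √2 - t := by linarith [ht.2]
  have hfac : 2 - t^2 = (√2 - t) * (√2 + t) := by nlinarith
  have hr2pos : 0 < 2 - t^2 := by rw [hfac]; positivity
  set r := √(2 - t^2) with hr
  have hr0 : 0 < r := Real.sqrt_pos.mpr hr2pos
  have hr2 : r ≤ 2 := by rw [hr, Real.sqrt_le_left (by norm_num)]; nlinarith
  set z := h + |t - s| with hz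
  have hz0 : 0 < z := by positivity
  have hσ0 : 0 < s + h := by positivity
  set σ := s + h with hσ
  have htz : t ≤ σ + z := by
    have := le_abs_self (t - s)
    linarith
  have hz3 : z ≤ 3 := by
    have : |t - s| ≤ 2 := by rw [abs_le]; constructor <;> linarith [ht.2]
    linarith
  have b1 : t ^ δ ≤ 2 ^ δ * (σ ^ δ + z ^ δ) := by
    have hm : t ≤ 2 * max σ z := by
      have := le_max_left σ z; have := le_max_right σ z; linarith
    have hm0 : 0 < max σ z := lt_max_of_lt_left hσ0
    calc t ^ δ ≤ (2 * max σ z) ^ δ := by gcongr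
      _ = 2 ^ δ * (max σ z) ^ δ := Real.mul_rpow (by norm_num) hm0.le
      _ ≤ _ := by
        gcongr
        have : 0 < σ ^ δ := by positivity
        have : 0 < z ^ δ := by positivity
        rcases max_choice σ z with h | h <;> rw [h] <;> linarith
  have hh' : 1 ≤ h ^ (-δ) := Real.one_le_rpow_of_pos_of_le_one_of_nonpos hh hh1 (by linarith)
  have b2 : σ ^ (-δ) * t ^ δ ≤ 2 ^ δ * (1 + h ^ (-δ) * z ^ δ) := by
    have e1 : σ ^ (-δ) * σ ^ δ = 1 := by rw [← Real.rpow_add hσ0]; simp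
    have e2 : σ ^ (-δ) ≤ h ^ (-δ) :=
      Real.rpow_le_rpow_of_nonpos hh (by linarith) (by linarith)
    calc σ ^ (-δ) * t ^ δ ≤ σ ^ (-δ) * (2 ^ δ * (σ ^ δ + z ^ δ)) := by gcongr
      _ = 2 ^ δ * (σ ^ (-δ) * σ ^ δ + σ ^ (-δ) * z ^ δ) := by ring
      _ ≤ _ := by rw [e1]; gcongr
  have b3 : r ^ (β - 1/2) ≤ 2 ^ (β + 1/2) * r⁻¹ := by
    have : r ^ (β - 1/2) = r ^ (β + 1/2) * r⁻¹ := by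
      rw [← Real.rpow_neg_one r, ← Real.rpow_add hr0]; congr 1; ring
    rw [this]
    have : 0 ≤ β + 1/2 := by linarith
    gcongr
  set D : ℝ := 2 ^ δ * 2 ^ (β + 1/2) with hD
  have hD0 : 0 < D := by positivity
  set H := h ^ (-δ) with hH
  have hH0 : 0 < H := by positivity
  have ez : z ^ (δ - 1) = z ^ δ * z⁻¹ := by
    rw [← Real.rpow_neg_one z, ← Real.rpow_add hz0]; congr 1
  have ez1 : z ^ (-1:ℝ) = z⁻¹ := Real.rpow_neg_one z
  have b4 : G ≤ C * D * (z⁻¹ + H * (z ^ δ * z⁻¹)) * r⁻¹ := by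
    have h1 : z * G ≤ z * (C * D * (z⁻¹ + H * (z ^ δ * z⁻¹)) * r⁻¹) := by
      calc z * G ≤ C * (σ ^ (-δ) * (t ^ δ * r ^ (β - 1/2))) := hb
        _ = C * ((σ ^ (-δ) * t ^ δ) * r ^ (β - 1/2)) := by ring
        _ ≤ C * ((2 ^ δ * (1 + H * z ^ δ)) * (2 ^ (β + 1/2) * r⁻¹)) := by gcongr
        _ = _ := by rw [hD]; field_simp
    exact le_of_mul_le_mul_left h1 hz0
  rw [ez1, ez]
  set w := (√2 - t) ^ (-(1/2):ℝ) with hw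
  have hw0 : 0 < w := by positivity
  set E : ℝ := 5 * (1 + 3 ^ δ) with hE
  have hE0 : 0 < E := by positivity
  have hZ0 : 0 < z⁻¹ + H * (z ^ δ * z⁻¹) := by positivity
  set Z := z⁻¹ + H * (z ^ δ * z⁻¹) with hZ
  refine b4.trans ?_
  suffices hsuf : Z * r⁻¹ ≤ (2 + E) * (Z + H * w) by
    have := mul_le_mul_of_nonneg_left hsuf (mul_pos hC hD0).le
    linarith
  have hHw : 0 < H * w := by positivity
  rcases le_or_gt t (6/5) with hc | hc
  · have : r⁻¹ ≤ 2 := by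
      rw [inv_le_comm₀ hr0 (by norm_num), hr]
      apply Real.le_sqrt_of_sq_le
      nlinarith
    have k1 : Z * r⁻¹ ≤ Z * 2 := by gcongr
    have k2 := mul_pos hE0 hZ0
    have k3 := mul_pos hE0 hHw
    linarith only [k1, k2, k3, hHw]
  · have hz5 : z⁻¹ ≤ 5 := by
      rw [inv_le_comm₀ hz0 (by norm_num)]
      have := le_abs_self (t - s)
      linarith
    have hrw : r⁻¹ ≤ w := by
      rw [hw, Real.rpow_neg hd0.le, ← Real.sqrt_eq_rpow]
      have : √(√2 - t) ≤ r := by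
        apply Real.sqrt_le_sqrt
        rw [hfac]
        apply le_mul_of_one_le_right hd0.le
        linarith
      have : 0 < √(√2 - t) := Real.sqrt_pos.mpr hd0
      gcongr
    have hZE : Z ≤ E * H := by
      have : z ^ δ ≤ 3 ^ δ := by gcongr
      have e : Z = z⁻¹ * (1 + H * z ^ δ) := by rw [hZ]; ring
      calc Z = z⁻¹ * (1 + H * z ^ δ) := e
        _ ≤ 5 * (H + H * 3 ^ δ) := by gcongr
        _ = E * H := by rw [hE]; ring
    have k1 : Z * r⁻¹ ≤ (E * H) * w := by gcongr
    have k2 := mul_pos hE0 hZ0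
    linarith only [k1, k2, hHw, hZ0]

lemma int_abs_rpow {e h s : ℝ} (hh : 0 < h) (hs0 : 0 ≤ s) (hs1 : s ≤ 1) :
    ∫ t in (0:ℝ)..√2, (h + |t - s|) ^ e ≤ 2 * ∫ v in h..(h + 2), v ^ e := by
  have hq0 : 1 ≤ √2 := by rw [Real.one_le_sqrt]; norm_num
  have hq1 : √2 ≤ 2 := by rw [Real.sqrt_le_left (by norm_num)]; norm_num
  have cont : Continuous fun t : ℝ => (h + |t - s|) ^ e := by
    apply Continuous.rpow_const (by fun_prop)
    intro t; left; positivity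
  rw [← intervalIntegral.integral_add_adjacent_intervals (b := s)
    (cont.intervalIntegrable _ _) (cont.intervalIntegrable _ _)]
  have ii : ∀ u v, h ≤ u → u ≤ v → IntervalIntegrable (fun v : ℝ => v ^ e) volume u v := by
    intro u v hu huv
    apply intervalIntegral.intervalIntegrable_rpow
    right
    rw [uIcc_of_le huv]
    rintro ⟨h1, _⟩; linarith
  have mono : ∀ w, 0 ≤ w → w ≤ 2 → ∫ v in h..(h + w), v ^ e ≤ ∫ v in h..(h + 2), v ^ e := by
    intro w hw0 hw2
    apply intervalIntegral.integral_mono_interval le_rfl (by linarith) (by linarith)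
    · filter_upwards [ae_restrict_mem measurableSet_Ioc] with v hv
      have : 0 < v := lt_trans hh hv.1
      simp only [Pi.zero_apply]; positivity
    · exact ii _ _ le_rfl (by linarith)
  have e1 : ∫ t in (0:ℝ)..s, (h + |t - s|) ^ e = ∫ v in h..(h + s), v ^ e := by
    have := intervalIntegral.integral_comp_sub_left (a := 0) (b := s) (fun v : ℝ => v ^ e) (h + s)
    rw [sub_zero, show h + s - s = h by ring] at this
    rw [← this]
    apply intervalIntegral.integral_congr
    intro t ht
    rw [uIcc_of_le hs0] at ht
    simp only
    rw [abs_of_nonpos (by linarith [ht.2])]; congr 1; ring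
  have e2 : ∫ t in s..√2, (h + |t - s|) ^ e = ∫ v in h..(h + (√2 - s)), v ^ e := by
    have := intervalIntegral.integral_comp_add_left (a := s) (b := √2) (fun v : ℝ => v ^ e) (h - s)
    rw [show h - s + s = h by ring, show h - s + √2 = h + (√2 - s) by ring] at this
    rw [← this]
    apply intervalIntegral.integral_congr
    intro t ht
    rw [uIcc_of_le (by linarith)] at ht
    simp only
    rw [abs_of_nonneg (by linarith [ht.1])]; congr 1; ring
  rw [e1, e2]
  have := mono s hs0 (by linarith)
  have := mono (√2 - s) (by linarith) (by linarith)
  linarith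

lemma int_log {h : ℝ} (hh : 0 < h) (hh1 : h ≤ 1) :
    ∫ v in h..(h + 2), v ^ (-1:ℝ) ≤ Real.log (3 / h) := by
  have : ∫ v in h..(h + 2), v ^ (-1:ℝ) = ∫ v in h..(h + 2), v⁻¹ := by
    congr 1; ext v; exact Real.rpow_neg_one v
  rw [this, integral_inv_of_pos hh (by linarith)]
  apply Real.log_le_log (by positivity)
  gcongr; linarith

lemma int_pow {h δ : ℝ} (hδ : 0 < δ) (hh : 0 < h) (hh1 : h ≤ 1) :
    ∫ v in h..(h + 2), v ^ (δ - 1) ≤ 3 ^ δ / δ := by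
  rw [integral_rpow (Or.inl (by linarith)), sub_add_cancel]
  have : 0 < h ^ δ := by positivity
  have : (h + 2) ^ δ ≤ 3 ^ δ := by
    apply Real.rpow_le_rpow (by linarith) (by linarith) hδ.le
  gcongr
  linarith

lemma int_end : IntervalIntegrable (fun t : ℝ => (√2 - t) ^ (-(1/2):ℝ)) volume 0 (√2) := by
  have h := (intervalIntegral.intervalIntegrable_rpow' (a := √2) (b := 0) (r := (-(1/2):ℝ))
    (by norm_num)).comp_sub_left (√2)
  simpa using h

lemma change_var (F : ℝ → ℝ) :
    ∫ y in Icc (-1:ℝ) 1, F y = ∫ t in Ioo (0:ℝ) (√2), F (1 - t^2) * (2 * t) := by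
  have hq2 := Real.sq_sqrt (show (0:ℝ) ≤ 2 by norm_num)
  have himg : (fun t : ℝ => 1 - t^2) '' Ioo (0:ℝ) (√2) = Ioo (-1) 1 := by
    ext y
    constructor
    · rintro ⟨t, ht, rfl⟩
      have h1 := ht.1; have h2 := ht.2
      constructor <;> simp only <;> nlinarith
    · rintro ⟨h1, h2⟩
      refine ⟨√(1 - y), ⟨Real.sqrt_pos.mpr (by linarith), Real.sqrt_lt_sqrt (by linarith) (by linarith)⟩, ?_⟩
      simp only
      rw [Real.sq_sqrt (by linarith)]; ring
  rw [integral_Icc_eq_integral_Ioo, ← himg,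
    integral_image_eq_integral_abs_deriv_smul (f' := fun t => -(2 * t)) measurableSet_Ioo]
  · apply setIntegral_congr_fun measurableSet_Ioo
    intro t ht
    simp only [smul_eq_mul]
    rw [abs_neg, abs_of_pos (by linarith [ht.1])]; ring
  · intro t _
    have := ((hasDerivAt_pow 2 t).const_sub 1).hasDerivWithinAt (s := Ioo (0:ℝ) (√2))
    simpa using this
  · intro u hu v hv huv
    simp only at huv
    have h1 := hu.1; have h2 := hv.1
    nlinarith

lemma half_leb {i j α β : ℝ} (hα : -(1/2) ≤ α) (hβ : -(1/2) ≤ β) (hi : 0 ≤ i) (hj : 0 ≤ j)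
    {p : ℕ → Polynomial ℝ} (hp : ONPJ (i + α) (j + β) p) :
    ∃ C : ℝ, 0 < C ∧ ∀ n : ℕ, ∀ x ∈ Icc (0:ℝ) 1,
      Jw (i/2) (j/2) x * (∫ y in Icc (-1:ℝ) 1, |CDK p n x y| * Jw (i/2) (j/2) y * Jw α β y)
      ≤ C * (((n:ℝ) + 1) ^ (α + 1/2) + Real.log (3 * ((n:ℝ) + 1))) := by
  obtain ⟨C, hC, hG⟩ := G_bound hα hβ hi hj hp
  set δ := α + 1/2 with hδ
  have hδ0 : 0 ≤ δ := by linarith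
  set M := C * (2 ^ δ * 2 ^ (β + 1/2)) * (2 + 5 * (1 + 3 ^ δ)) with hM
  have hM0 : 0 < M := by positivity
  set I3 := ∫ t in (0:ℝ)..√2, (√2 - t) ^ (-(1/2):ℝ) with hI3
  have hI30 : 0 ≤ I3 := by
    apply intervalIntegral.integral_nonneg (by positivity)
    intro t ht
    have : 0 ≤ √2 - t := by linarith [ht.2]
    positivity
  set T := if δ = 0 then 0 else 3 ^ δ / δ with hT
  have hT0 : 0 ≤ T := by rw [hT]; split_ifs <;> positivity
  refine ⟨2 * M * (2 * T + I3 + 4), by positivity, ?_⟩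
  intro n x hx
  rw [← integral_const_mul, change_var]
  set h := 1 / ((n:ℝ) + 1) with hh
  have hh0 : 0 < h := by positivity
  have hh1 : h ≤ 1 := by
    rw [hh, div_le_one (by positivity)]
    have : (0:ℝ) ≤ n := by positivity
    linarith
  set s := √(1 - x) with hs
  have hs0 : 0 ≤ s := Real.sqrt_nonneg _
  have hs1 : s ≤ 1 := by
    rw [hs, Real.sqrt_le_left (by norm_num)]; linarith [hx.1]
  have hxI : x ∈ Icc (-1:ℝ) 1 := ⟨by linarith [hx.1], hx.2⟩
  have cont : ∀ e : ℝ, IntervalIntegrable (fun t : ℝ => (h + |t - s|) ^ e) volume 0 (√2) := by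
    intro e
    apply Continuous.intervalIntegrable
    apply Continuous.rpow_const (by fun_prop)
    intro t; left; positivity
  have hIntg : IntervalIntegrable (fun t => 2 * M * ((h + |t - s|) ^ (-1:ℝ)
      + h ^ (-δ) * (h + |t - s|) ^ (δ - 1) + h ^ (-δ) * (√2 - t) ^ (-(1/2):ℝ))) volume 0 (√2) :=
    (((cont _).add ((cont _).const_mul _)).add (int_end.const_mul _)).const_mul _
  have hq : (0:ℝ) ≤ √2 := by positivity
  have hsub : ∀ t ∈ Ioo (0:ℝ) (√2), 1 - t^2 ∈ Icc (-1:ℝ) 1 := by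
    intro t ht
    have hq2 := Real.sq_sqrt (show (0:ℝ) ≤ 2 by norm_num)
    have h1 := ht.1; have h2 := ht.2
    constructor <;> nlinarith
  have step1 : ∫ t in Ioo (0:ℝ) (√2), (Jw (i/2) (j/2) x * (|CDK p n x (1 - t^2)|
        * Jw (i/2) (j/2) (1 - t^2) * Jw α β (1 - t^2))) * (2 * t)
      ≤ ∫ t in Ioo (0:ℝ) (√2), 2 * M * ((h + |t - s|) ^ (-1:ℝ)
      + h ^ (-δ) * (h + |t - s|) ^ (δ - 1) + h ^ (-δ) * (√2 - t) ^ (-(1/2):ℝ)) := by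
    apply integral_mono_of_nonneg
    · filter_upwards [ae_restrict_mem measurableSet_Ioo] with t ht
      have h1 : 0 ≤ Jw (i/2) (j/2) x := Jw_nonneg hxI
      have h2 : 0 ≤ Jw (i/2) (j/2) (1 - t^2) := Jw_nonneg (hsub t ht)
      have h3 : 0 ≤ Jw α β (1 - t^2) := Jw_nonneg (hsub t ht)
      have := ht.1
      simp only [Pi.zero_apply]
      positivity
    · rw [intervalIntegrable_iff_integrableOn_Ioo_of_le hq] at hIntg
      exact hIntg
    · filter_upwards [ae_restrict_mem measurableSet_Ioo] with t ht
      have := maj_pt hδ0 hβ hC hh0 hh1 hs0 hs1 ht (hG n x hx t ht)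
      rw [← hM] at this
      linarith
  refine step1.trans ?_
  rw [← integral_Ioc_eq_integral_Ioo, ← intervalIntegral.integral_of_le hq,
    intervalIntegral.integral_const_mul,
    intervalIntegral.integral_add ((cont _).add ((cont _).const_mul _)) (int_end.const_mul _),
    intervalIntegral.integral_add (cont _) ((cont _).const_mul _),
    intervalIntegral.integral_const_mul, intervalIntegral.integral_const_mul, ← hI3]
  have eH : h ^ (-δ) = ((n:ℝ) + 1) ^ δ := by
    rw [hh, one_div, Real.inv_rpow (by positivity), Real.rpow_neg (by positivity), inv_inv]
  have eL : 3 / h = 3 * ((n:ℝ) + 1) := by rw [hh]; field_simp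
  have hL := int_log hh0 hh1
  rw [eL] at hL
  have hL1 := int_abs_rpow (e := -1) hh0 hs0 hs1
  rw [eH]
  set N := ((n:ℝ) + 1) ^ δ with hN
  have hN1 : 1 ≤ N := Real.one_le_rpow (by have : (0:ℝ) ≤ n := by positivity
                                           linarith) hδ0
  set Lg := Real.log (3 * ((n:ℝ) + 1)) with hLg
  have hLg0 : 0 ≤ Lg := by
    apply Real.log_nonneg
    have : (0:ℝ) ≤ n := by positivity
    linarith
  have hmid : N * ∫ t in (0:ℝ)..√2, (h + |t - s|) ^ (δ - 1) ≤ 2 * T * N + 2 * Lg := by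
    have h1 := int_abs_rpow (e := δ - 1) hh0 hs0 hs1
    by_cases hd : δ = 0
    · have : N = 1 := by rw [hN, hd, Real.rpow_zero]
      rw [this, hd, zero_sub]
      rw [hd, zero_sub] at h1
      linarith
    · have h2 := int_pow (lt_of_le_of_ne hδ0 (Ne.symm hd)) hh0 hh1
      have hTe : T = 3 ^ δ / δ := by rw [hT, if_neg hd]
      rw [← hTe] at h2
      have : N * ∫ t in (0:ℝ)..√2, (h + |t - s|) ^ (δ - 1) ≤ N * (2 * T) := by
        gcongr; linarith
      linarith
  have hfin : (∫ t in (0:ℝ)..√2, (h + |t - s|) ^ (-1:ℝ))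
      + N * (∫ t in (0:ℝ)..√2, (h + |t - s|) ^ (δ - 1)) + N * I3
      ≤ (2 * T + I3 + 4) * (N + Lg) := by
    have g1 : 0 ≤ T * Lg := by positivity
    have g2 : 0 ≤ I3 * Lg := by positivity
    linarith
  calc _ ≤ 2 * M * ((2 * T + I3 + 4) * (N + Lg)) := by gcongr
    _ = _ := by ring


lemma full_leb {i j α β : ℝ} (hα : -(1/2) ≤ α) (hβ : -(1/2) ≤ β) (hi : 0 ≤ i) (hj : 0 ≤ j)
    {p : ℕ → Polynomial ℝ} (hp : ONPJ (i + α) (j + β) p) :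
    ∃ C : ℝ, 0 < C ∧ ∀ n : ℕ, ∀ x ∈ Icc (-1:ℝ) 1,
      Jw (i/2) (j/2) x * (∫ y in Icc (-1:ℝ) 1, |CDK p n x y| * Jw (i/2) (j/2) y * Jw α β y)
      ≤ C * (((n:ℝ) + 1) ^ (max α β + 1/2) + Real.log (3 * ((n:ℝ) + 1))) := by
  obtain ⟨C1, hC1, h1⟩ := half_leb hα hβ hi hj hp
  obtain ⟨C2, hC2, h2⟩ := half_leb hβ hα hj hi hp.reflect
  refine ⟨C1 + C2, by positivity, ?_⟩
  intro n x hx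
  have hn : (0:ℝ) ≤ n := by positivity
  have hL : 0 ≤ Real.log (3 * ((n:ℝ) + 1)) := Real.log_nonneg (by linarith)
  have m1 : ((n:ℝ) + 1) ^ (α + 1/2) ≤ ((n:ℝ) + 1) ^ (max α β + 1/2) :=
    Real.rpow_le_rpow_of_exponent_le (by linarith) (by linarith [le_max_left α β])
  have m2 : ((n:ℝ) + 1) ^ (β + 1/2) ≤ ((n:ℝ) + 1) ^ (max α β + 1/2) :=
    Real.rpow_le_rpow_of_exponent_le (by linarith) (by linarith [le_max_right α β])
  set N := ((n:ℝ) + 1) ^ (max α β + 1/2)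
  set Lg := Real.log (3 * ((n:ℝ) + 1))
  have hN : 0 ≤ N := by positivity
  rcases le_total 0 x with h | h
  · refine (h1 n x ⟨h, hx.2⟩).trans ?_
    calc _ ≤ C1 * (N + Lg) := by gcongr
      _ ≤ _ := by gcongr; linarith
  · have h3 := h2 n (-x) ⟨by linarith, by linarith [hx.1]⟩
    have e1 : ∀ (c d z : ℝ), Jw d c (-z) = Jw c d z := by
      intro c d z; unfold Jw
      rw [sub_neg_eq_add, ← sub_eq_add_neg, mul_comm]
    have e2 : ∀ y, CDK (fun n => (p n).comp (-Polynomial.X)) n (-x) y = CDK p n x (-y) := by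
      intro y; unfold CDK; simp
    have e3 : ∫ y in Icc (-1:ℝ) 1, |CDK (fun n => (p n).comp (-Polynomial.X)) n (-x) y|
        * Jw (j/2) (i/2) y * Jw β α y
        = ∫ y in Icc (-1:ℝ) 1, |CDK p n x y| * Jw (i/2) (j/2) y * Jw α β y := by
      rw [integral_Icc_eq_integral_Ioc, integral_Icc_eq_integral_Ioc,
        ← intervalIntegral.integral_of_le (by norm_num),
        ← intervalIntegral.integral_of_le (by norm_num)]
      have := intervalIntegral.integral_comp_neg (a := -1) (b := 1)
        (fun y => |CDK p n x y| * Jw (i/2) (j/2) y * Jw α β y)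
      rw [neg_neg] at this
      rw [← this]
      congr 1; ext y
      rw [e2, e1, e1]
    rw [e1, e3] at h3
    refine h3.trans ?_
    calc _ ≤ C2 * (N + Lg) := by gcongr
      _ ≤ _ := by gcongr; linarith

lemma onps_onpj {i j α β : ℝ} {p : ℕ → Polynomial ℝ}
    (hp : IsONPS (fun x => Jw i j x * Jw α β x) p) : ONPJ (i + α) (j + β) p := by
  refine ⟨hp.1, ?_⟩
  intro n m
  rw [← hp.2.2 n m]
  unfold ipJ
  rw [integral_Icc_eq_integral_Ioo, integral_Icc_eq_integral_Ioo]
  apply setIntegral_congr_fun measurableSet_Ioo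
  intro x hx
  have h1 : 0 < 1 - x := by linarith [hx.2]
  have h2 : 0 < 1 + x := by linarith [hx.1]
  simp only [Jw]
  rw [Real.rpow_add h1, Real.rpow_add h2]
  ring

lemma log_part {n : ℕ} (hn : 2 ≤ n) : 1 + Real.log (3 * ((n:ℝ) + 1)) ≤ 6 * Real.log n := by
  have h2 : (2:ℝ) ≤ n := by exact_mod_cast hn
  have h3 : Real.log 2 ≤ Real.log n := Real.log_le_log (by norm_num) h2
  have h4 := Real.log_two_gt_d9
  have h5 : Real.log (3 * ((n:ℝ) + 1)) ≤ Real.log ((n:ℝ)^4) := by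
    apply Real.log_le_log (by positivity)
    have : (8:ℝ) ≤ (n:ℝ)^3 := by
      calc (8:ℝ) = 2^3 := by norm_num
        _ ≤ (n:ℝ)^3 := by gcongr
    nlinarith
  rw [Real.log_pow] at h5
  push_cast at h5
  linarith

lemma pow_part {M : ℝ} (hM : 0 < M) {n : ℕ} (hn : 1 ≤ n) :
    ((n:ℝ) + 1) ^ M + Real.log (3 * ((n:ℝ) + 1)) ≤ (2 ^ M + 6 ^ M / M) * (n:ℝ) ^ M := by
  have h1 : (1:ℝ) ≤ n := by exact_mod_cast hn
  have a : ((n:ℝ) + 1) ^ M ≤ 2 ^ M * (n:ℝ) ^ M := by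
    rw [← Real.mul_rpow (by norm_num) (by linarith)]
    exact Real.rpow_le_rpow (by linarith) (by linarith) hM.le
  have b : Real.log (3 * ((n:ℝ) + 1)) ≤ 6 ^ M / M * (n:ℝ) ^ M := by
    calc Real.log (3 * ((n:ℝ) + 1)) ≤ Real.log (6 * n) :=
          Real.log_le_log (by positivity) (by linarith)
      _ ≤ (6 * (n:ℝ)) ^ M / M := Real.log_le_rpow_div (by positivity) hM
      _ = _ := by rw [Real.mul_rpow (by norm_num) (by linarith)]; ring
  linarith

/-- order of the Lebesgue constants of the operators
`s_n^{(α,β),i,j}`, stated as a uniform bound on the Lebesgue function. -/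
theorem stmt_14
    (α β : ℝ) (hα : -(1/2 : ℝ) ≤ α) (hβ : -(1/2 : ℝ) ≤ β)
    (i j : ℝ) (hi : 0 ≤ i) (hj : 0 ≤ j)
    (p : ℕ → Polynomial ℝ)
    (hp : IsONPS (fun x => Jw i j x * Jw α β x) p) :
    ((-(1/2 : ℝ) < max α β →
      ∃ c : ℝ, 0 < c ∧ ∀ n : ℕ, 1 ≤ n → ∀ x ∈ Icc (-1:ℝ) 1,
        Jw (i/2) (j/2) x *
          (∫ y in Icc (-1:ℝ) 1, |CDK p n x y| * Jw (i/2) (j/2) y * Jw α β y)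
          ≤ c * (n:ℝ) ^ (max α β + 1/2)) ∧
     (α = -(1/2 : ℝ) → β = -(1/2 : ℝ) →
      ∃ c : ℝ, 0 < c ∧ ∀ n : ℕ, 2 ≤ n → ∀ x ∈ Icc (-1:ℝ) 1,
        Jw (i/2) (j/2) x *
          (∫ y in Icc (-1:ℝ) 1, |CDK p n x y| * Jw (i/2) (j/2) y * Jw α β y)
          ≤ c * Real.log n)) := by
  obtain ⟨C, hC, h⟩ := full_leb hα hβ hi hj (onps_onpj hp)
  constructor
  · intro hM
    have hM' : 0 < max α β + 1/2 := by linarith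
    refine ⟨C * (2 ^ (max α β + 1/2) + 6 ^ (max α β + 1/2) / (max α β + 1/2)), by positivity, ?_⟩
    intro n hn x hx
    refine (h n x hx).trans ?_
    rw [mul_assoc]
    exact mul_le_mul_of_nonneg_left (pow_part hM' hn) hC.le
  · intro ha hb
    refine ⟨C * 6, by positivity, ?_⟩
    intro n hn x hx
    refine (h n x hx).trans ?_
    rw [mul_assoc]
    apply mul_le_mul_of_nonneg_left _ hC.le
    have e : max α β + 1/2 = 0 := by rw [ha, hb]; norm_num
    rw [e, Real.rpow_zero]
    exact log_part hn
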